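/- There exists a flow (t,E) ↦ E(t), assigning to each t ∈ [0,1] and each Lebesgue measurable set E ⊂ ℝ of finite measure a Lebesgue measurable set E(t) ⊂ ℝ (defined up to null sets), with the following properties for all such sets: (1) |E(0) Δ E| = 0 and |E(1) Δ E⋆| = 0; (2) |E(t)| = |E| for all t ∈ [0,1]; (3) |E(s) Δ E(t)| → 0 as s → t; (4) if E ⊂ Ẽ (up to a null set) then E(s) ⊂ Ẽ(s) (up to a null set) for all s ∈ [0,1]; (5) |E₁(t) Δ E₂(t)| ≤ |E₁ Δ E₂| for all measurable sets E₁, E₂ of finite measure and all t; (6) for 0 ≤ s ≤ t ≤ 1, |E(t) Δ (E(s))(τ)| = 0 where 1 − τ = (1−t)/(1−s); (7) for any three measurable sets E₁, E₂, E₃ ⊂ ℝ of finite measure, the function t ↦ T(E₁(t),E₂(t),E₃(t)) is continuous and nondecreasing on [0,1], where T(E₁,E₂,E₃) = ∫∫ 1_{E₁}(x) 1_{E₂}(y) 1_{E₃}(−x−y) dx dy. -/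

import Mathlib

/-!
The flow is a continuous-time Steiner symmetrization in one dimension, described here by a variational
formula valid for every set of finite measure.

Let `Φ'' = 1_E` and `α = 1 - t`. A point `z` is a contact point if the parabola `α (y - z)² / 2`,
added to the tangent line of `Φ` at `z`, stays above `Φ`; the other points form the open set `swept E α`,
and `E(t) = α • swept E α`. Since the Taylor remainder `tilt E z y` of `Φ` is monotone in `E`, the
flow is monotone under inclusion by construction. On every component (gap) of the swept set, `E` and
`α` times Lebesgue measure have the same mass and the same first moment (`gap_mass`, `gap_tilt`): a gap
is an interval on which the concave majorant of `Φ - α z² / 2` is affine. Since almost all of `E` is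
swept (Lebesgue density), the measure of `E` is preserved, and contractivity follows from monotonicity
and conservation of measure by comparison with `E ∪ F`. Conservation of mass and first moment
between contact points gives `swept (swept E α) β ⊆ swept E (α β)`, hence equality up to null sets by
comparing measures; this is the semigroup property. Continuity in time holds because sets of constant
measure converge in measure as soon as almost every point of the limit eventually belongs to them.

For the trilinear form, an interval is translated rigidly with centre multiplied by `1 - t`, and so is
each member of a finite family of separated intervals for a short time. For three intervals the form is
an even function of the sum of the centres, decreasing away from `0`, so it does not decrease when all
centres are multiplied by `1 - t`; summing over triples gives the short-time inequality for finite unions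
of intervals. Finite unions of intervals are preserved by the flow, so the semigroup property, continuity
and continuous induction yield monotonicity on `[0, 1]`. Density of finite unions and contractivity
extend it to all sets of finite measure.
-/

open MeasureTheory Set Filter

noncomputable section

/-- Indicator function of a set of reals, with value `1 : ℝ`. -/
def ind1 (E : Set ℝ) : ℝ → ℝ := E.indicator 1

/-- The trilinear form `T(E₁,E₂,E₃) = ∫∫ 1_{E₁}(x) 1_{E₂}(y) 1_{E₃}(−x−y) dx dy`. -/
def T1 (A B C : Set ℝ) : ℝ :=
  ∫ p : ℝ × ℝ, ind1 A p.1 * ind1 B p.2 * ind1 C (-p.1 - p.2)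

/-- `E⋆`: the closed interval centered at the origin with the same measure as `E`. -/
def intervalStar (E : Set ℝ) : Set ℝ :=
  Set.Icc (-(volume E).toReal / 2) ((volume E).toReal / 2)

/-! ### Mass and first moment of a set on an interval -/

/-- Signed measure of `E` between `a` and `b`. -/
def mass (E : Set ℝ) (a b : ℝ) : ℝ := ∫ s in a..b, ind1 E s

/-- Second-order Taylor remainder at `z`, evaluated at `y`, of a function `Φ` with `Φ'' = 1_E`. -/
def tilt (E : Set ℝ) (z y : ℝ) : ℝ := ∫ s in z..y, (y - s) * ind1 E s

lemma ind1_nonneg (E : Set ℝ) (x : ℝ) : 0 ≤ ind1 E x := by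
  unfold ind1; exact Set.indicator_nonneg (fun _ _ => zero_le_one) x

lemma ind1_le_one (E : Set ℝ) (x : ℝ) : ind1 E x ≤ 1 := by
  unfold ind1; exact Set.indicator_le_self' (fun _ _ => zero_le_one) x

lemma ind1_of_mem {E : Set ℝ} {x : ℝ} (h : x ∈ E) : ind1 E x = 1 := by
  simp [ind1, h]

lemma ind1_of_notMem {E : Set ℝ} {x : ℝ} (h : x ∉ E) : ind1 E x = 0 := by
  simp [ind1, h]

lemma measurable_ind1 {E : Set ℝ} (hE : MeasurableSet E) : Measurable (ind1 E) :=
  measurable_one.indicator hE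

lemma locInt_ind1 {E : Set ℝ} (hE : MeasurableSet E) : LocallyIntegrable (ind1 E) volume :=
  (locallyIntegrable_const (1 : ℝ)).indicator hE

lemma ii_ind1 {E : Set ℝ} (hE : MeasurableSet E) (a b : ℝ) :
    IntervalIntegrable (ind1 E) volume a b :=
  ((locInt_ind1 hE).integrableOn_isCompact isCompact_uIcc).intervalIntegrable

lemma ii_mul_ind1 {E : Set ℝ} (hE : MeasurableSet E) {f : ℝ → ℝ} (hf : Continuous f) (a b : ℝ) :
    IntervalIntegrable (fun s => f s * ind1 E s) volume a b :=
  (ii_ind1 hE a b).continuousOn_mul hf.continuousOn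

lemma ii_tilt {E : Set ℝ} (hE : MeasurableSet E) (y a b : ℝ) :
    IntervalIntegrable (fun s => (y - s) * ind1 E s) volume a b :=
  ii_mul_ind1 hE (by fun_prop) a b

lemma mass_add {E : Set ℝ} (hE : MeasurableSet E) (a b c : ℝ) :
    mass E a b + mass E b c = mass E a c :=
  intervalIntegral.integral_add_adjacent_intervals (ii_ind1 hE a b) (ii_ind1 hE b c)

lemma mass_self (E : Set ℝ) (a : ℝ) : mass E a a = 0 := by simp [mass]

lemma mass_nonneg (E : Set ℝ) {a b : ℝ} (h : a ≤ b) : 0 ≤ mass E a b :=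
  intervalIntegral.integral_nonneg h fun _ _ => ind1_nonneg E _

/-- Change of base point in the Taylor remainder. -/
lemma tilt_add {E : Set ℝ} (hE : MeasurableSet E) (z a y : ℝ) :
    tilt E z y = tilt E z a + mass E z a * (y - a) + tilt E a y := by
  unfold tilt mass
  rw [← intervalIntegral.integral_add_adjacent_intervals (ii_tilt hE y z a) (ii_tilt hE y a y),
    ← intervalIntegral.integral_mul_const,
    ← intervalIntegral.integral_add (ii_tilt hE a z a) ((ii_ind1 hE z a).mul_const _)]
  congr 1
  apply intervalIntegral.integral_congr
  intro s _
  simp only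
  ring

/-- Monotonicity in the set; the sign of `y - s` compensates the orientation of the integral. -/
lemma tilt_mono {E F : Set ℝ} (hE : MeasurableSet E) (hF : MeasurableSet F)
    (h : volume (E \ F) = 0) (z y : ℝ) : tilt E z y ≤ tilt F z y := by
  have hae : ∀ᵐ s ∂(volume : Measure ℝ), ind1 E s ≤ ind1 F s := by
    have h2 : ∀ᵐ s ∂(volume : Measure ℝ), s ∉ E \ F := measure_eq_zero_iff_ae_notMem.1 h
    filter_upwards [h2] with s hs
    by_cases hsE : s ∈ E
    · have : s ∈ F := by by_contra hF; exact hs ⟨hsE, hF⟩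
      rw [ind1_of_mem hsE, ind1_of_mem this]
    · rw [ind1_of_notMem hsE]; exact ind1_nonneg _ _
  unfold tilt
  rcases le_total z y with hzy | hzy
  · apply intervalIntegral.integral_mono_ae_restrict hzy (ii_tilt hE _ _ _) (ii_tilt hF _ _ _)
    filter_upwards [ae_restrict_of_ae hae, ae_restrict_mem measurableSet_Icc] with s hs hs2
    exact mul_le_mul_of_nonneg_left hs (sub_nonneg.2 hs2.2)
  · rw [intervalIntegral.integral_symm, intervalIntegral.integral_symm y z, neg_le_neg_iff]
    apply intervalIntegral.integral_mono_ae_restrict hzy (ii_tilt hF _ _ _) (ii_tilt hE _ _ _)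
    filter_upwards [ae_restrict_of_ae hae, ae_restrict_mem measurableSet_Icc] with s hs hs2
    exact mul_le_mul_of_nonpos_left hs (sub_nonpos.2 hs2.1)

lemma tilt_empty (z y : ℝ) : tilt ∅ z y = 0 := by simp [tilt, ind1]

lemma tilt_nonneg {E : Set ℝ} (hE : MeasurableSet E) (z y : ℝ) : 0 ≤ tilt E z y := by
  rw [← tilt_empty z y]
  exact tilt_mono MeasurableSet.empty hE (by simp) z y

lemma continuous_mass {E : Set ℝ} (hE : MeasurableSet E) (a : ℝ) : Continuous (mass E a) :=
  intervalIntegral.continuous_primitive (ii_ind1 hE) a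

lemma continuous_tilt {E : Set ℝ} (hE : MeasurableSet E) (z : ℝ) : Continuous (tilt E z) := by
  have h : tilt E z = fun y => y * mass E z y - ∫ s in z..y, s * ind1 E s := by
    funext y
    unfold tilt mass
    rw [← intervalIntegral.integral_const_mul,
      ← intervalIntegral.integral_sub ((ii_ind1 hE z y).const_mul _)
        (ii_mul_ind1 hE continuous_id' z y)]
    simp only [sub_mul]
  rw [h]
  exact (continuous_id.mul (continuous_mass hE z)).sub
    (intervalIntegral.continuous_primitive (fun a b => ii_mul_ind1 hE continuous_id' a b) z)

lemma tilt_eq {E : Set ℝ} (hE : MeasurableSet E) (z y : ℝ) :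
    tilt E z y = tilt E 0 y - tilt E 0 z - mass E 0 z * (y - z) := by
  rw [tilt_add hE 0 z y]; ring

lemma continuous_tilt_left {E : Set ℝ} (hE : MeasurableSet E) (y : ℝ) :
    Continuous fun z => tilt E z y := by
  have h : (fun z => tilt E z y) =
      fun z => tilt E 0 y - tilt E 0 z - mass E 0 z * (y - z) := by
    funext z; exact tilt_eq hE z y
  rw [h]
  exact (continuous_const.sub (continuous_tilt hE 0)).sub
    ((continuous_mass hE 0).mul (continuous_const.sub continuous_id))

lemma mass_eq {E : Set ℝ} (hE : MeasurableSet E) {a b : ℝ} (h : a ≤ b) :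
    mass E a b = (volume (E ∩ Ioc a b)).toReal := by
  unfold mass
  rw [intervalIntegral.integral_of_le h]
  unfold ind1
  rw [integral_indicator_one hE, measureReal_restrict_apply hE, Measure.real]

lemma mass_le_volume {E : Set ℝ} (hE : MeasurableSet E) (hfin : volume E ≠ ⊤) {a b : ℝ}
    (h : a ≤ b) : mass E a b ≤ (volume E).toReal := by
  rw [mass_eq hE h]
  exact ENNReal.toReal_mono hfin (measure_mono inter_subset_left)

lemma tilt_le {E : Set ℝ} (hE : MeasurableSet E) (hfin : volume E ≠ ⊤) (z y : ℝ) :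
    tilt E z y ≤ (volume E).toReal * |y - z| := by
  rcases le_total z y with hzy | hzy
  · rw [abs_of_nonneg (sub_nonneg.2 hzy)]
    calc tilt E z y ≤ ∫ s in z..y, ind1 E s * (y - z) := by
          apply intervalIntegral.integral_mono_on hzy (ii_tilt hE _ _ _)
            ((ii_ind1 hE _ _).mul_const _)
          intro s hs
          rw [mul_comm]
          exact mul_le_mul_of_nonneg_left (by linarith [hs.1]) (ind1_nonneg _ _)
      _ = mass E z y * (y - z) := by rw [intervalIntegral.integral_mul_const]; rfl
      _ ≤ _ := mul_le_mul_of_nonneg_right (mass_le_volume hE hfin hzy) (sub_nonneg.2 hzy)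
  · rw [abs_of_nonpos (sub_nonpos.2 hzy)]
    calc tilt E z y = ∫ s in y..z, -((y - s) * ind1 E s) := by
          unfold tilt
          rw [intervalIntegral.integral_symm, intervalIntegral.integral_neg]
      _ ≤ ∫ s in y..z, ind1 E s * (z - y) := by
          apply intervalIntegral.integral_mono_on hzy (ii_tilt hE _ _ _).neg
            ((ii_ind1 hE _ _).mul_const _)
          intro s hs
          have := mul_le_mul_of_nonneg_left (show s - y ≤ z - y by linarith [hs.2])
            (ind1_nonneg E s)
          simp only [Pi.neg_apply]
          linarith
      _ = mass E y z * (z - y) := by rw [intervalIntegral.integral_mul_const]; rfl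
      _ ≤ _ := by
          rw [neg_sub]
          exact mul_le_mul_of_nonneg_right (mass_le_volume hE hfin hzy) (sub_nonneg.2 hzy)

/-! ### The swept set and its contact set -/

/-- Complement of the set of points `z` at which the parabola of opening `α` tangent to `Φ`
(where `Φ'' = 1_E`) stays above `Φ`. Equivalently, the set where `Φ - α z² / 2` lies strictly
below its least concave majorant. -/
def swept (E : Set ℝ) (α : ℝ) : Set ℝ := {z | ∃ y, α * (y - z) ^ 2 / 2 < tilt E z y}

lemma notMem_swept {E : Set ℝ} {α z : ℝ} :
    z ∉ swept E α ↔ ∀ y, tilt E z y ≤ α * (y - z) ^ 2 / 2 := by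
  simp [swept]

lemma isOpen_swept {E : Set ℝ} (hE : MeasurableSet E) (α : ℝ) : IsOpen (swept E α) := by
  have : swept E α = ⋃ y, {z | α * (y - z) ^ 2 / 2 < tilt E z y} := by
    ext z; simp [swept]
  rw [this]
  exact isOpen_iUnion fun y => isOpen_lt (by fun_prop) (continuous_tilt_left hE y)

lemma swept_mono {E F : Set ℝ} (hE : MeasurableSet E) (hF : MeasurableSet F)
    (h : volume (E \ F) = 0) (α : ℝ) : swept E α ⊆ swept F α := by
  rintro z ⟨y, hy⟩
  exact ⟨y, hy.trans_le (tilt_mono hE hF h z y)⟩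

lemma swept_anti {E : Set ℝ} {α β : ℝ} (h : α ≤ β) : swept E β ⊆ swept E α := by
  rintro z ⟨y, hy⟩
  refine ⟨y, lt_of_le_of_lt ?_ hy⟩
  have := mul_le_mul_of_nonneg_right h (sq_nonneg (y - z))
  linarith

/-- Every slope `p` is the slope of `Φ - α z² / 2` at some contact point, namely a maximum point
of `Φ - α z² / 2 - p z`. -/
lemma exists_contact_slope {E : Set ℝ} (hE : MeasurableSet E) (hfin : volume E ≠ ⊤) {α : ℝ}
    (hα : 0 < α) (p : ℝ) : ∃ z, z ∉ swept E α ∧ mass E 0 z - α * z = p := by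
  set V := (volume E).toReal with hV
  have hV0 : 0 ≤ V := ENNReal.toReal_nonneg
  set g : ℝ → ℝ := fun y => tilt E 0 y - α * y ^ 2 / 2 - p * y with hg
  have hgc : Continuous g := by
    have := continuous_tilt hE 0
    fun_prop
  set R := 2 * (V + |p|) / α with hR
  have hR0 : 0 ≤ R := by positivity
  obtain ⟨z, -, hz⟩ := isCompact_Icc.exists_isMaxOn (nonempty_Icc.2 (by linarith : -R ≤ R))
    hgc.continuousOn
  have g0 : g 0 = 0 := by simp [hg, tilt]
  have hmax : ∀ y, g y ≤ g z := by
    intro y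
    by_cases hy : y ∈ Icc (-R) R
    · exact hz hy
    · refine le_trans ?_ (hz (show (0 : ℝ) ∈ Icc (-R) R from ⟨by linarith, hR0⟩))
      rw [g0]
      have hyR : R < |y| := by
        by_contra hcon
        exact hy (abs_le.1 (not_lt.1 hcon))
      have h1 := tilt_le hE hfin 0 y
      rw [sub_zero] at h1
      have h2 : 2 * (V + |p|) < |y| * α := by
        rwa [hR, div_lt_iff₀ hα] at hyR
      have h3 : -(p * y) ≤ |p| * |y| := by rw [← abs_mul]; exact neg_le_abs _
      have h4 : y ^ 2 = |y| * |y| := by rw [← sq, sq_abs]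
      have h5 := mul_le_mul_of_nonneg_left h2.le (abs_nonneg y)
      simp only [hg]
      rw [h4]
      nlinarith
  -- With `q` the slope defect at the maximum, `q h ≤ α h² / 2` for all `h`, so `q = 0`.
  have key : ∀ y, tilt E z y + (mass E 0 z - α * z - p) * (y - z) ≤ α * (y - z) ^ 2 / 2 := by
    intro y
    have h1 := hmax y
    simp only [hg] at h1
    rw [tilt_eq hE z y]
    linarith
  have hq : mass E 0 z - α * z - p = 0 := by
    set q := mass E 0 z - α * z - p
    have h1 := key (z + q / α)
    have h2 := tilt_nonneg hE z (z + q / α)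
    have h3 : q * (q / α) ≤ α * (q / α) ^ 2 / 2 := by
      rw [add_sub_cancel_left] at h1; linarith
    have h4 : q * (q / α) = q ^ 2 / α := by ring
    have h5 : α * (q / α) ^ 2 / 2 = q ^ 2 / α / 2 := by field_simp
    rw [h4, h5] at h3
    have h6 : q ^ 2 / α ≤ 0 := by linarith
    have h7 : q ^ 2 ≤ 0 := by
      have := (div_le_iff₀ hα).1 h6
      linarith
    exact pow_eq_zero_iff (two_ne_zero) |>.1 (le_antisymm h7 (sq_nonneg q))
  refine ⟨z, notMem_swept.2 fun y => ?_, by linarith⟩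
  have := key y
  rw [hq] at this
  linarith

/-- The derivative of `Φ - α z² / 2` is nonincreasing along contact points. -/
lemma contact_mass_le {E : Set ℝ} (hE : MeasurableSet E) {α a b : ℝ} (hab : a ≤ b)
    (ha : a ∉ swept E α) (hb : b ∉ swept E α) : mass E a b ≤ α * (b - a) := by
  rcases hab.eq_or_lt with rfl | hab
  · simp [mass_self]
  have h1 := notMem_swept.1 ha b
  have h2 := notMem_swept.1 hb a
  have h3 := tilt_add hE b a b
  have h4 := mass_add hE b a b
  have h0 : tilt E b b = 0 := by simp [tilt]
  rw [mass_self] at h4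
  have h5 : mass E b a = - mass E a b := by linarith
  rw [h5, h0] at h3
  have : mass E a b * (b - a) ≤ α * (b - a) * (b - a) := by nlinarith
  exact le_of_mul_le_mul_right this (by linarith)

/-- On a gap `(a, b)` of the contact set, `E` and `α` times Lebesgue measure have the same mass. -/
lemma gap_mass {E : Set ℝ} (hE : MeasurableSet E) (hfin : volume E ≠ ⊤) {α a b : ℝ}
    (hα : 0 < α) (hab : a ≤ b) (ha : a ∉ swept E α) (hb : b ∉ swept E α)
    (hgap : Ioo a b ⊆ swept E α) : mass E a b = α * (b - a) := by
  refine le_antisymm (contact_mass_le hE hab ha hb) ?_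
  by_contra hlt
  rw [not_le] at hlt
  have hadd := mass_add hE 0 a b
  -- a slope strictly between the slopes at `b` and at `a` would be attained inside the gap
  obtain ⟨z, hz, hzp⟩ := exists_contact_slope hE hfin hα
    (((mass E 0 a - α * a) + (mass E 0 b - α * b)) / 2)
  have haz : a < z := by
    by_contra h
    have h1 := contact_mass_le hE (not_lt.1 h) hz ha
    have h2 := mass_add hE 0 z a
    linarith
  have hzb : z < b := by
    by_contra h
    have h1 := contact_mass_le hE (not_lt.1 h) hb hz
    have h2 := mass_add hE 0 b z
    linarith
  exact hz (hgap ⟨haz, hzb⟩)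

/-- On a gap `(a, b)` of the contact set, `E` and `α` times Lebesgue measure have the same first
moment. -/
lemma gap_tilt {E : Set ℝ} (hE : MeasurableSet E) (hfin : volume E ≠ ⊤) {α a b : ℝ}
    (hα : 0 < α) (hab : a ≤ b) (ha : a ∉ swept E α) (hb : b ∉ swept E α)
    (hgap : Ioo a b ⊆ swept E α) : tilt E a b = α * (b - a) ^ 2 / 2 := by
  have hm := gap_mass hE hfin hα hab ha hb hgap
  have h1 := notMem_swept.1 ha b
  have h2 := notMem_swept.1 hb a
  have h3 := tilt_add hE b a b
  have h4 := mass_add hE b a b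
  have h0 : tilt E b b = 0 := by simp [tilt]
  rw [mass_self, hm] at h4
  have h5 : mass E b a = - (α * (b - a)) := by linarith
  rw [h5, h0] at h3
  nlinarith

lemma exists_contact_le {E : Set ℝ} (hE : MeasurableSet E) (hfin : volume E ≠ ⊤) {α : ℝ}
    (hα : 0 < α) (x : ℝ) : ∃ a ≤ x, a ∉ swept E α := by
  obtain ⟨a, ha, hp⟩ := exists_contact_slope hE hfin hα ((volume E).toReal + α * |x|)
  refine ⟨a, ?_, ha⟩
  have hV0 : 0 ≤ (volume E).toReal := ENNReal.toReal_nonneg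
  have h1 : mass E 0 a ≤ (volume E).toReal := by
    rcases le_total 0 a with h | h
    · exact mass_le_volume hE hfin h
    · have h2 := mass_nonneg E h
      have h3 := mass_add hE 0 a 0
      rw [mass_self] at h3
      linarith
  have h2 : α * (a + |x|) ≤ 0 := by linarith
  have h3 : a + |x| ≤ 0 := by
    by_contra h
    have := mul_pos hα (not_le.1 h)
    linarith
  linarith [neg_abs_le x]

lemma exists_contact_ge {E : Set ℝ} (hE : MeasurableSet E) (hfin : volume E ≠ ⊤) {α : ℝ}
    (hα : 0 < α) (x : ℝ) : ∃ a, x ≤ a ∧ a ∉ swept E α := by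
  obtain ⟨a, ha, hp⟩ := exists_contact_slope hE hfin hα (-(volume E).toReal - α * |x|)
  refine ⟨a, ?_, ha⟩
  have hV0 : 0 ≤ (volume E).toReal := ENNReal.toReal_nonneg
  have h1 : -(volume E).toReal ≤ mass E 0 a := by
    rcases le_total 0 a with h | h
    · linarith [mass_nonneg E h]
    · have h2 := mass_le_volume hE hfin h
      have h3 := mass_add hE 0 a 0
      rw [mass_self] at h3
      linarith
  have h2 : 0 ≤ α * (a - |x|) := by linarith
  have h3 : 0 ≤ a - |x| := by
    by_contra h
    have := mul_neg_of_pos_of_neg hα (not_le.1 h)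
    linarith
  linarith [le_abs_self x]

/-- `(a, b)` is a connected component of the swept set. -/
def IsGap (E : Set ℝ) (α a b : ℝ) : Prop :=
  a < b ∧ a ∉ swept E α ∧ b ∉ swept E α ∧ Ioo a b ⊆ swept E α

lemma exists_gap {E : Set ℝ} (hE : MeasurableSet E) (hfin : volume E ≠ ⊤) {α : ℝ}
    (hα : 0 < α) {z : ℝ} (hz : z ∈ swept E α) : ∃ a b, IsGap E α a b ∧ z ∈ Ioo a b := by
  have hcl : IsClosed (swept E α)ᶜ := (isOpen_swept hE α).isClosed_compl
  obtain ⟨a₀, ha₀, ha₀'⟩ := exists_contact_le hE hfin hα z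
  obtain ⟨b₀, hb₀, hb₀'⟩ := exists_contact_ge hE hfin hα z
  set A := (swept E α)ᶜ ∩ Iic z
  set B := (swept E α)ᶜ ∩ Ici z
  have hA : sSup A ∈ A := (hcl.inter isClosed_Iic).csSup_mem ⟨a₀, ha₀', ha₀⟩ ⟨z, fun x hx => hx.2⟩
  have hB : sInf B ∈ B := (hcl.inter isClosed_Ici).csInf_mem ⟨b₀, hb₀', hb₀⟩ ⟨z, fun x hx => hx.2⟩
  have haz : sSup A < z := lt_of_le_of_ne hA.2 (fun h => hA.1 (h ▸ hz))
  have hzb : z < sInf B := lt_of_le_of_ne hB.2 (fun h => hB.1 (h ▸ hz))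
  refine ⟨sSup A, sInf B, ⟨haz.trans hzb, hA.1, hB.1, ?_⟩, haz, hzb⟩
  intro x hx
  by_contra hxn
  rcases le_total x z with h | h
  · exact absurd (le_csSup ⟨z, fun x hx => hx.2⟩ (show x ∈ A from ⟨hxn, h⟩)) (not_le.2 hx.1)
  · exact absurd (csInf_le ⟨z, fun x hx => hx.2⟩ (show x ∈ B from ⟨hxn, h⟩)) (not_le.2 hx.2)

lemma IsGap.eq_of_mem {E : Set ℝ} {α a b a' b' x : ℝ} (h : IsGap E α a b) (h' : IsGap E α a' b')
    (hx : x ∈ Ioo a b) (hx' : x ∈ Ioo a' b') : a = a' ∧ b = b' := by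
  obtain ⟨-, ha, hb, hs⟩ := h
  obtain ⟨-, ha', hb', hs'⟩ := h'
  constructor
  · rcases lt_trichotomy a a' with h | h | h
    · exact absurd (hs ⟨h, hx'.1.trans hx.2⟩) ha'
    · exact h
    · exact absurd (hs' ⟨h, hx.1.trans hx'.2⟩) ha
  · rcases lt_trichotomy b b' with h | h | h
    · exact absurd (hs' ⟨hx'.1.trans hx.2, h⟩) hb
    · exact h
    · exact absurd (hs ⟨hx.1.trans hx'.2, h⟩) hb'

lemma isGap_subset_of_contact {E : Set ℝ} {α a b c d : ℝ} (h : IsGap E α a b)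
    (hc : c ∉ swept E α) (hd : d ∉ swept E α) {x : ℝ} (hx : x ∈ Ioo a b) (hx' : x ∈ Ioo c d) :
    c ≤ a ∧ b ≤ d := by
  constructor
  · by_contra hlt
    exact hc (h.2.2.2 ⟨not_le.1 hlt, hx'.1.trans hx.2⟩)
  · by_contra hlt
    exact hd (h.2.2.2 ⟨hx.1.trans hx'.2, not_le.1 hlt⟩)

/-- Lebesgue density: almost every point of `E` is swept as soon as `α < 1`. -/
lemma ae_subset_swept {E : Set ℝ} (hE : MeasurableSet E) {α : ℝ} (hα : α < 1) :
    volume (E \ swept E α) = 0 := by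
  have hd := LocallyIntegrable.ae_hasDerivAt_integral (locInt_ind1 hE)
  rw [measure_eq_zero_iff_ae_notMem]
  filter_upwards [hd] with z hz hmem
  obtain ⟨hzE, hzC⟩ := hmem
  have h1 := hz 0
  rw [ind1_of_mem hzE] at h1
  set ε := (1 - α) / 4 with hε
  have hε0 : 0 < ε := by rw [hε]; linarith
  have h2 := (hasDerivAt_iff_isLittleO.1 h1).def hε0
  obtain ⟨δ, hδ, hball⟩ := Metric.eventually_nhds_iff.1 h2
  have h3 := @hball (z + δ / 2) (by rw [Real.dist_eq, add_sub_cancel_left, abs_of_pos] <;> linarith)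
  set y := z + δ / 2 with hy
  have hzy : z < y := by rw [hy]; linarith
  have h4 : |mass E z y - (y - z)| ≤ ε * (y - z) := by
    have h5 := mass_add hE 0 z y
    have : mass E z y - (y - z) = (∫ t in (0:ℝ)..y, ind1 E t) - (∫ t in (0:ℝ)..z, ind1 E t)
        - (y - z) • (1:ℝ) := by
      unfold mass at *
      rw [smul_eq_mul]
      linarith
    rw [this, ← Real.norm_eq_abs]
    refine h3.trans_eq ?_
    rw [Real.norm_eq_abs, abs_of_pos (by linarith)]
  have h5 := notMem_swept.1 hzC y
  -- the part of `(z, y)` outside `E` costs at most `(y - z) |(z, y) \ E| ≤ ε (y - z) ^ 2`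
  have h6 : (y - z) ^ 2 / 2 - tilt E z y ≤ (y - z) * ((y - z) - mass E z y) := by
    have e1 : (y - z) ^ 2 / 2 = ∫ s in z..y, (y - s) := by
      rw [intervalIntegral.integral_sub (by simp) (by simp)]
      simp
      ring
    have e2 : (y - z) * ((y - z) - mass E z y) = ∫ s in z..y, (y - z) * (1 - ind1 E s) := by
      rw [intervalIntegral.integral_const_mul, intervalIntegral.integral_sub (by simp)
        (ii_ind1 hE _ _)]
      simp [mass]
    rw [e1, e2]
    unfold tilt
    rw [← intervalIntegral.integral_sub (by apply Continuous.intervalIntegrable; fun_prop)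
      (ii_tilt hE _ _ _)]
    apply intervalIntegral.integral_mono_on hzy.le
    · exact (Continuous.intervalIntegrable (by fun_prop) _ _).sub (ii_tilt hE _ _ _)
    · exact ((by simp : IntervalIntegrable (fun _ => (1:ℝ)) volume z y).sub
        (ii_ind1 hE _ _)).const_mul _
    · intro s hs
      have : (y - s) * (1 - ind1 E s) ≤ (y - z) * (1 - ind1 E s) :=
        mul_le_mul_of_nonneg_right (by linarith [hs.1]) (by linarith [ind1_le_one E s])
      linarith
  have h7 := (abs_le.1 h4).1
  have hpos : 0 < (y - z) ^ 2 := by have : 0 < y - z := by linarith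
                                    positivity
  have h8 : (y - z) * ((y - z) - mass E z y) ≤ (y - z) * (ε * (y - z)) :=
    mul_le_mul_of_nonneg_left (by linarith) (by linarith)
  have h9 : (y - z) ^ 2 * (1 - α) / 4 ≤ 0 := by
    rw [hε] at h8
    nlinarith
  have : 0 < (y - z) ^ 2 * (1 - α) := mul_pos hpos (by linarith)
  linarith

/-- For open sets the inclusion in the swept set holds at every point. -/
lemma open_subset_swept {U : Set ℝ} (hU : IsOpen U) {α : ℝ} (hα : α < 1) : U ⊆ swept U α := by
  intro z hz
  obtain ⟨δ, hδ, hball⟩ := Metric.isOpen_iff.1 hU z hz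
  refine ⟨z + δ / 2, ?_⟩
  have h : tilt U z (z + δ / 2) = ∫ s in z..(z + δ / 2), (z + δ / 2 - s) := by
    unfold tilt
    apply intervalIntegral.integral_congr
    intro s hs
    rw [uIcc_of_le (by linarith)] at hs
    have : s ∈ U := hball (by
      rw [Metric.mem_ball, Real.dist_eq, abs_of_nonneg] <;> linarith [hs.1, hs.2])
    simp only [ind1_of_mem this, mul_one]
  rw [h, intervalIntegral.integral_sub (by simp) (by simp)]
  simp
  nlinarith [mul_pos hδ hδ]

/-! ### Sweeping conserves mass and first moment -/

/-- A balance between `E` and `α` times its swept set that holds on every gap holds between any two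
contact points, since almost no contact point belongs to `E`. -/
lemma sweep_integral {E : Set ℝ} (hE : MeasurableSet E) (hfin : volume E ≠ ⊤) {α : ℝ}
    (hα : 0 < α) (hα1 : α < 1) {a b : ℝ} (ha : a ∉ swept E α) (hb : b ∉ swept E α)
    (f : ℝ → ℝ) (hf : Continuous f)
    (hgap : ∀ c d, IsGap E α c d → ∫ s in c..d, f s * (ind1 E s - α) = 0) :
    ∫ s in Ioo a b, f s * (ind1 E s - α * ind1 (swept E α) s) = 0 := by
  set N := swept E α with hN
  have hNo : IsOpen N := isOpen_swept hE α
  have hNm : MeasurableSet N := hNo.measurableSet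
  set S : Set (ℝ × ℝ) := {p | IsGap E α p.1 p.2 ∧ a ≤ p.1 ∧ p.2 ≤ b} with hS
  have hdisj : S.PairwiseDisjoint fun p => Ioo p.1 p.2 := by
    intro p hp q hq hpq
    rw [Function.onFun, Set.disjoint_left]
    intro x hx hx'
    obtain ⟨h1, h2⟩ := hp.1.eq_of_mem hq.1 hx hx'
    exact hpq (Prod.ext h1 h2)
  have hcount : S.Countable := hdisj.countable_of_isOpen (fun p _ => isOpen_Ioo)
    (fun p hp => nonempty_Ioo.2 hp.1.1)
  have hU : N ∩ Ioo a b = ⋃ p ∈ S, Ioo p.1 p.2 := by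
    ext x
    simp only [mem_iUnion, mem_inter_iff, exists_prop]
    constructor
    · rintro ⟨hxN, hx⟩
      obtain ⟨c, d, hcd, hxcd⟩ := exists_gap hE hfin hα hxN
      obtain ⟨h1, h2⟩ := isGap_subset_of_contact hcd ha hb hxcd hx
      exact ⟨(c, d), ⟨hcd, h1, h2⟩, hxcd⟩
    · rintro ⟨p, hp, hx⟩
      exact ⟨hp.1.2.2.2 hx, lt_of_le_of_lt hp.2.1 hx.1, lt_of_lt_of_le hx.2 hp.2.2⟩
  set g : ℝ → ℝ := fun s => f s * (ind1 E s - α * ind1 N s) with hg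
  have hgi : IntegrableOn g (Ioo a b) := by
    have h1 : LocallyIntegrable g volume := by
      have := ((locInt_ind1 hE).sub ((locInt_ind1 hNm).smul α)).continuous_smul hf
      simpa [hg, smul_eq_mul] using this
    exact (h1.integrableOn_isCompact isCompact_Icc).mono_set Ioo_subset_Icc_self
  have hzero : ∀ᵐ s ∂(volume : Measure ℝ), s ∉ N → g s = 0 := by
    have h2 : ∀ᵐ s ∂(volume : Measure ℝ), s ∉ E \ N :=
      measure_eq_zero_iff_ae_notMem.1 (ae_subset_swept hE hα1)
    filter_upwards [h2] with s hs hsN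
    have : s ∉ E := fun h => hs ⟨h, hsN⟩
    simp [hg, ind1_of_notMem this, ind1_of_notMem hsN]
  have h1 : ∫ s in Ioo a b, g s = ∫ s in N ∩ Ioo a b, g s := by
    apply setIntegral_eq_of_subset_of_ae_sdiff_eq_zero measurableSet_Ioo.nullMeasurableSet
      inter_subset_right
    filter_upwards [hzero] with s hs hs2
    exact hs fun h => hs2.2 ⟨h, hs2.1⟩
  have : Countable S := hcount
  have hgU : IntegrableOn g (⋃ p : S, Ioo (p : ℝ × ℝ).1 (p : ℝ × ℝ).2) := by
    have h2 := hgi.mono_set (inter_subset_right : N ∩ Ioo a b ⊆ Ioo a b)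
    rwa [hU, biUnion_eq_iUnion] at h2
  rw [h1, hU, biUnion_eq_iUnion, integral_iUnion (fun p => measurableSet_Ioo) (hdisj.subtype _ _)
    hgU]
  have h3 : ∀ p : S, ∫ s in Ioo (p : ℝ × ℝ).1 (p : ℝ × ℝ).2, g s = 0 := by
    rintro ⟨p, hp⟩
    rw [← integral_Ioc_eq_integral_Ioo, ← intervalIntegral.integral_of_le hp.1.1.le,
      ← hgap p.1 p.2 hp.1]
    apply intervalIntegral.integral_congr_ae_restrict
    rw [uIoc_of_le hp.1.1.le, ← restrict_Ioo_eq_restrict_Ioc]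
    filter_upwards [ae_restrict_mem measurableSet_Ioo] with s hs
    have hsN : s ∈ N := hp.1.2.2.2 hs
    simp [hg, ind1_of_mem hsN]
  simp [h3]

lemma integral_affine (b c d : ℝ) : ∫ s in c..d, (b - s) = (d - c) ^ 2 / 2 + (b - d) * (d - c) := by
  rw [intervalIntegral.integral_sub (by simp) (by simp)]
  simp
  ring

lemma setIntegral_sweep {E : Set ℝ} (hE : MeasurableSet E) (α : ℝ) {a b : ℝ} (hab : a ≤ b)
    {f : ℝ → ℝ} (hf : Continuous f) :
    ∫ s in Ioo a b, f s * (ind1 E s - α * ind1 (swept E α) s) =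
      (∫ s in a..b, f s * ind1 E s) - α * ∫ s in a..b, f s * ind1 (swept E α) s := by
  have hN := (isOpen_swept hE α).measurableSet
  rw [← integral_Ioc_eq_integral_Ioo, ← intervalIntegral.integral_of_le hab,
    ← intervalIntegral.integral_const_mul,
    ← intervalIntegral.integral_sub (ii_mul_ind1 hE hf _ _)
      ((ii_mul_ind1 hN hf _ _).const_mul α)]
  congr 1
  funext s
  ring

lemma sweep_mass {E : Set ℝ} (hE : MeasurableSet E) (hfin : volume E ≠ ⊤) {α : ℝ}
    (hα : 0 < α) (hα1 : α < 1) {a b : ℝ} (hab : a ≤ b) (ha : a ∉ swept E α) (hb : b ∉ swept E α) :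
    mass E a b = α * mass (swept E α) a b := by
  have h := sweep_integral hE hfin hα hα1 ha hb (fun _ => 1) continuous_const (by
    rintro c d ⟨hcd, hc, hd, hgap⟩
    have h1 := gap_mass hE hfin hα hcd.le hc hd hgap
    simp only [one_mul]
    rw [intervalIntegral.integral_sub (ii_ind1 hE _ _) (by simp)]
    unfold mass at h1
    rw [h1]
    simp
    ring)
  rw [setIntegral_sweep hE α hab continuous_const] at h
  simp only [one_mul] at h
  unfold mass
  linarith

lemma sweep_tilt_of_le {E : Set ℝ} (hE : MeasurableSet E) (hfin : volume E ≠ ⊤) {α : ℝ}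
    (hα : 0 < α) (hα1 : α < 1) {a b : ℝ} (hab : a ≤ b) (ha : a ∉ swept E α) (hb : b ∉ swept E α) :
    tilt E a b = α * tilt (swept E α) a b := by
  have hbc : Continuous fun s : ℝ => b - s := by fun_prop
  have h := sweep_integral hE hfin hα hα1 ha hb (fun s => b - s) hbc (by
    rintro c d ⟨hcd, hc, hd, hgap⟩
    have h1 := gap_mass hE hfin hα hcd.le hc hd hgap
    have h2 := gap_tilt hE hfin hα hcd.le hc hd hgap
    have h3 : ∫ s in c..d, (b - s) * (ind1 E s - α) =
        tilt E c d + mass E c d * (b - d) - α * ∫ s in c..d, (b - s) := by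
      unfold tilt mass
      rw [← intervalIntegral.integral_mul_const, ← intervalIntegral.integral_const_mul,
        ← intervalIntegral.integral_add (ii_tilt hE _ _ _) ((ii_ind1 hE _ _).mul_const _),
        ← intervalIntegral.integral_sub
          ((ii_tilt hE _ _ _).add ((ii_ind1 hE _ _).mul_const _))
          ((hbc.intervalIntegrable _ _).const_mul α)]
      congr 1
      funext s
      ring
    rw [h3, h1, h2, integral_affine]
    ring)
  rw [setIntegral_sweep hE α hab hbc] at h
  unfold tilt
  linarith

lemma sweep_tilt {E : Set ℝ} (hE : MeasurableSet E) (hfin : volume E ≠ ⊤) {α : ℝ}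
    (hα : 0 < α) (hα1 : α < 1) {a b : ℝ} (ha : a ∉ swept E α) (hb : b ∉ swept E α) :
    tilt E a b = α * tilt (swept E α) a b := by
  rcases le_total a b with hab | hab
  · exact sweep_tilt_of_le hE hfin hα hα1 hab ha hb
  · have hN := (isOpen_swept hE α).measurableSet
    have h1 := sweep_tilt_of_le hE hfin hα hα1 hab hb ha
    have h2 := sweep_mass hE hfin hα hα1 hab hb ha
    have h3 := tilt_add hE b a b
    have h4 := tilt_add hN b a b
    have e1 : tilt E b b = 0 := by simp [tilt]
    have e2 : tilt (swept E α) b b = 0 := by simp [tilt]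
    rw [e1, h1, h2] at h3
    rw [e2] at h4
    linear_combination h3 * (-1) + α * h4

lemma tendsto_measure_inter_Ioc (S : Set ℝ) {a b : ℕ → ℝ}
    (ha : ∀ n : ℕ, a n ≤ -n) (hb : ∀ n : ℕ, (n : ℝ) ≤ b n) :
    Tendsto (fun n => volume (S ∩ Ioc (a n) (b n))) atTop (nhds (volume S)) := by
  have h1 : Tendsto (fun n : ℕ => volume (S ∩ Ioc (-(n : ℝ)) n)) atTop (nhds (volume S)) := by
    have hmono : Monotone fun n : ℕ => S ∩ Ioc (-(n : ℝ)) n := by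
      intro m n hmn
      have : (m : ℝ) ≤ n := by exact_mod_cast hmn
      exact inter_subset_inter_right _ (Ioc_subset_Ioc (by linarith) this)
    have h2 := tendsto_measure_iUnion_atTop (μ := (volume : Measure ℝ)) hmono
    have h3 : (⋃ n : ℕ, S ∩ Ioc (-(n : ℝ)) n) = S := by
      rw [← inter_iUnion, inter_eq_left]
      intro x _
      obtain ⟨n, hn⟩ := exists_nat_gt |x|
      exact mem_iUnion.2 ⟨n, (abs_lt.1 hn).1, (abs_lt.1 hn).2.le⟩
    rwa [h3] at h2
  refine tendsto_of_tendsto_of_tendsto_of_le_of_le h1 tendsto_const_nhds (fun n => ?_) (fun n => ?_)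
  · exact measure_mono (inter_subset_inter_right _ (Ioc_subset_Ioc (ha n) (hb n)))
  · exact measure_mono inter_subset_left

/-- Sum of the mass balances of all gaps. -/
lemma volume_swept {E : Set ℝ} (hE : MeasurableSet E) (hfin : volume E ≠ ⊤) {α : ℝ}
    (hα : 0 < α) (hα1 : α < 1) : volume E = ENNReal.ofReal α * volume (swept E α) := by
  have hN := (isOpen_swept hE α).measurableSet
  choose a ha ha' using fun n : ℕ => exists_contact_le hE hfin hα (-(n : ℝ))
  choose b hb hb' using fun n : ℕ => exists_contact_ge hE hfin hα (n : ℝ)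
  have h1 := tendsto_measure_inter_Ioc E ha hb
  have h2 := tendsto_measure_inter_Ioc (swept E α) ha hb
  have h3 := ENNReal.Tendsto.const_mul (a := ENNReal.ofReal α) h2 (Or.inr ENNReal.ofReal_ne_top)
  refine tendsto_nhds_unique h1 (h3.congr fun n => ?_)
  have hn : (0 : ℝ) ≤ n := n.cast_nonneg
  have hab : a n ≤ b n := by linarith [ha n, hb n]
  have h4 := sweep_mass hE hfin hα hα1 hab (ha' n) (hb' n)
  rw [mass_eq hE hab, mass_eq hN hab] at h4
  have hf : ∀ S : Set ℝ, volume (S ∩ Ioc (a n) (b n)) ≠ ⊤ := fun S =>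
    ((measure_mono inter_subset_right).trans_lt measure_Ioc_lt_top).ne
  rw [← ENNReal.ofReal_toReal (hf E), h4, ENNReal.ofReal_mul hα.le, ENNReal.ofReal_toReal (hf _)]

lemma volume_swept_ne_top {E : Set ℝ} (hE : MeasurableSet E) (hfin : volume E ≠ ⊤) {α : ℝ}
    (hα : 0 < α) (hα1 : α < 1) : volume (swept E α) ≠ ⊤ := by
  intro h
  have := volume_swept hE hfin hα hα1
  rw [h, ENNReal.mul_top (by simpa using hα)] at this
  exact hfin this

lemma ae_eq_of_subset_of_volume {A B : Set ℝ} (h : A ⊆ B) (hA : MeasurableSet A)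
    (hB : volume B ≠ ⊤) (hv : volume A = volume B) : volume (symmDiff A B) = 0 := by
  rw [measure_symmDiff_eq_zero_iff]
  exact ae_eq_of_subset_of_measure_ge h hv.ge hA.nullMeasurableSet hB

/-! ### Composition of sweeps -/

lemma tilt_of_subset {N : Set ℝ} {a b y : ℝ} (hs : Ioo a b ⊆ N) (hy : y ∈ Ioc a b) :
    tilt N a y = (y - a) ^ 2 / 2 := by
  have h : tilt N a y = ∫ s in a..y, (y - s) := by
    unfold tilt
    apply intervalIntegral.integral_congr_ae_restrict
    rw [uIoc_of_le hy.1.le, ← restrict_Ioo_eq_restrict_Ioc]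
    filter_upwards [ae_restrict_mem measurableSet_Ioo] with s hsm
    simp [ind1_of_mem (hs ⟨hsm.1, hsm.2.trans_le hy.2⟩)]
  rw [h, integral_affine]
  ring

/-- If the tangent parabola of opening `α β` at `z` stays above `Φ`, then the one of opening `β` stays
above the potential of the `α`-swept set: at contact points of the `α`-sweep both potentials have
proportional tilts, and on a gap the difference is concave because `β < 1`. -/
lemma swept_swept_subset {E : Set ℝ} (hE : MeasurableSet E) (hfin : volume E ≠ ⊤) {α β : ℝ}
    (hα : 0 < α) (hα1 : α < 1) (hβ1 : β < 1) :
    swept (swept E α) β ⊆ swept E (α * β) := by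
  intro z hz
  by_contra hzc
  revert hz
  have hN := (isOpen_swept hE α).measurableSet
  have hzα : z ∉ swept E α := fun h => hzc (swept_anti (by nlinarith) h)
  have hcontact : ∀ y, y ∉ swept E α → tilt (swept E α) z y ≤ β * (y - z) ^ 2 / 2 := by
    intro y hy
    have h1 := sweep_tilt hE hfin hα hα1 hzα hy
    have h2 := notMem_swept.1 hzc y
    rw [h1] at h2
    have h3 : α * tilt (swept E α) z y ≤ α * (β * (y - z) ^ 2 / 2) := by linarith
    exact le_of_mul_le_mul_left h3 hα
  change z ∉ _
  rw [notMem_swept]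
  intro y
  by_cases hy : y ∈ swept E α
  · obtain ⟨a, b, ⟨hab, ha, hb, hgap⟩, hay, hyb⟩ := exists_gap hE hfin hα hy
    have h1 := hcontact a ha
    have h2 := hcontact b hb
    have e1 := tilt_add hN z a y
    have e2 := tilt_add hN z a b
    rw [tilt_of_subset hgap ⟨hay, hyb.le⟩] at e1
    rw [tilt_of_subset hgap ⟨hab, le_rfl⟩] at e2
    set m := mass (swept E α) z a
    set r := tilt (swept E α) z a
    have hba : 0 < b - a := by linarith
    have key : (β * (y - z) ^ 2 / 2 - tilt (swept E α) z y) * (b - a) =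
        (b - y) * (β * (a - z) ^ 2 / 2 - r) +
        (y - a) * (β * (b - z) ^ 2 / 2 - tilt (swept E α) z b) +
        (1 - β) / 2 * ((y - a) * (b - y) * (b - a)) := by
      rw [e1, e2]; ring
    have p1 : 0 ≤ (b - y) * (β * (a - z) ^ 2 / 2 - r) :=
      mul_nonneg (by linarith) (by linarith)
    have p2 : 0 ≤ (y - a) * (β * (b - z) ^ 2 / 2 - tilt (swept E α) z b) :=
      mul_nonneg (by linarith) (by linarith)
    have p3 : 0 ≤ (1 - β) / 2 * ((y - a) * (b - y) * (b - a)) := by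
      have : 0 < 1 - β := by linarith
      have : 0 < y - a := by linarith
      have : 0 < b - y := by linarith
      positivity
    have p4 : 0 ≤ β * (y - z) ^ 2 / 2 - tilt (swept E α) z y := by
      by_contra hneg
      have := mul_neg_of_neg_of_pos (not_le.1 hneg) hba
      linarith
    linarith
  · exact hcontact y hy

/-- The inclusion `swept_swept_subset` is an equality because both sides have the same measure. -/
lemma swept_swept {E : Set ℝ} (hE : MeasurableSet E) (hfin : volume E ≠ ⊤) {α β : ℝ}
    (hα : 0 < α) (hα1 : α < 1) (hβ : 0 < β) (hβ1 : β < 1) :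
    volume (symmDiff (swept (swept E α) β) (swept E (α * β))) = 0 := by
  have hN := (isOpen_swept hE α).measurableSet
  have hNf := volume_swept_ne_top hE hfin hα hα1
  have hαβ : 0 < α * β := mul_pos hα hβ
  have hαβ1 : α * β < 1 := by nlinarith
  refine ae_eq_of_subset_of_volume (swept_swept_subset hE hfin hα hα1 hβ1)
    (isOpen_swept hN β).measurableSet (volume_swept_ne_top hE hfin hαβ hαβ1) ?_
  have h1 := volume_swept hE hfin hα hα1
  have h2 := volume_swept hN hNf hβ hβ1
  have h3 := volume_swept hE hfin hαβ hαβ1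
  rw [h1, h2, ← mul_assoc, ← ENNReal.ofReal_mul hα.le] at h3
  exact (ENNReal.mul_right_inj (by simpa using hαβ) ENNReal.ofReal_ne_top).1 h3

/-- The set `α • A`. -/
def dil (α : ℝ) (A : Set ℝ) : Set ℝ := (fun x => x / α) ⁻¹' A

lemma volume_dil {α : ℝ} (hα : 0 < α) (A : Set ℝ) :
    volume (dil α A) = ENNReal.ofReal α * volume A := by
  have : dil α A = (fun x => x * α⁻¹) ⁻¹' A := by
    unfold dil; congr 1
  rw [this, Real.volume_preimage_mul_right (inv_ne_zero hα.ne'), inv_inv, abs_of_pos hα]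

lemma measurableSet_dil (α : ℝ) {A : Set ℝ} (hA : MeasurableSet A) : MeasurableSet (dil α A) :=
  (measurable_id.div_const α) hA

lemma tilt_dil {α : ℝ} (hα : 0 < α) (A : Set ℝ) (z y : ℝ) :
    tilt (dil α A) (α * z) (α * y) = α ^ 2 * tilt A z y := by
  unfold tilt
  rw [← intervalIntegral.mul_integral_comp_mul_left, ← intervalIntegral.integral_const_mul,
    ← intervalIntegral.integral_const_mul]
  congr 1
  funext s
  have : ind1 (dil α A) (α * s) = ind1 A s := by
    have hmem : α * s ∈ dil α A ↔ s ∈ A := by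
      simp only [dil, mem_preimage]
      rw [mul_div_cancel_left₀ _ hα.ne']
    by_cases h : s ∈ A
    · rw [ind1_of_mem h, ind1_of_mem (hmem.2 h)]
    · rw [ind1_of_notMem h, ind1_of_notMem (fun h' => h (hmem.1 h'))]
  rw [this]
  ring

lemma swept_dil {α : ℝ} (hα : 0 < α) (A : Set ℝ) (β : ℝ) :
    swept (dil α A) β = dil α (swept A β) := by
  ext x
  simp only [dil, mem_preimage]
  obtain ⟨z, rfl⟩ : ∃ z, x = α * z := ⟨x / α, by field_simp⟩
  rw [mul_div_cancel_left₀ _ hα.ne']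
  have key : ∀ y, (β * (α * y - α * z) ^ 2 / 2 < tilt (dil α A) (α * z) (α * y)) ↔
      β * (y - z) ^ 2 / 2 < tilt A z y := by
    intro y
    rw [tilt_dil hα]
    have : β * (α * y - α * z) ^ 2 / 2 = α ^ 2 * (β * (y - z) ^ 2 / 2) := by ring
    rw [this]
    exact mul_lt_mul_iff_right₀ (by positivity)
  constructor
  · rintro ⟨w, hw⟩
    refine ⟨w / α, (key _).1 ?_⟩
    rwa [mul_div_cancel₀ _ hα.ne']
  · rintro ⟨y, hy⟩
    exact ⟨α * y, (key y).2 hy⟩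

lemma dil_dil (α β : ℝ) (A : Set ℝ) : dil α (dil β A) = dil (β * α) A := by
  ext x
  simp only [dil, mem_preimage]
  rw [div_div, mul_comm]

lemma dil_symmDiff (α : ℝ) (A B : Set ℝ) : dil α (symmDiff A B) = symmDiff (dil α A) (dil α B) :=
  rfl

/-! ### The flow -/

/-- The symmetrization flow: `E(t)` is `(1 - t)` times the `(1 - t)`-swept set of `E`, completed by
`E(0) = E` and `E(1) = E⋆`. -/
def symFlow (t : ℝ) (E : Set ℝ) : Set ℝ :=
  if t ≤ 0 then E else if 1 ≤ t then intervalStar E else dil (1 - t) (swept E (1 - t))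

lemma symFlow_of_le {t : ℝ} (h : t ≤ 0) (E : Set ℝ) : symFlow t E = E := by
  simp [symFlow, h]

lemma symFlow_of_ge {t : ℝ} (h : 1 ≤ t) (E : Set ℝ) : symFlow t E = intervalStar E := by
  have : ¬ t ≤ 0 := by linarith
  simp [symFlow, h, this]

lemma symFlow_of_mem {t : ℝ} (h0 : 0 < t) (h1 : t < 1) (E : Set ℝ) :
    symFlow t E = dil (1 - t) (swept E (1 - t)) := by
  simp [symFlow, not_le.2 h0, not_le.2 h1]

lemma measurableSet_symFlow {E : Set ℝ} (hE : MeasurableSet E) (t : ℝ) :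
    MeasurableSet (symFlow t E) := by
  unfold symFlow
  split_ifs
  · exact hE
  · exact measurableSet_Icc
  · exact measurableSet_dil _ (isOpen_swept hE _).measurableSet

lemma volume_intervalStar {E : Set ℝ} (hfin : volume E ≠ ⊤) :
    volume (intervalStar E) = volume E := by
  unfold intervalStar
  rw [Real.volume_Icc]
  ring_nf
  exact ENNReal.ofReal_toReal hfin

lemma volume_symFlow {E : Set ℝ} (hE : MeasurableSet E) (hfin : volume E ≠ ⊤) (t : ℝ) :
    volume (symFlow t E) = volume E := by
  unfold symFlow
  split_ifs with h0 h1
  · rfl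
  · exact volume_intervalStar hfin
  · rw [volume_dil (by linarith), ← volume_swept hE hfin (by linarith) (by linarith)]

lemma volume_symFlow_ne_top {E : Set ℝ} (hE : MeasurableSet E) (hfin : volume E ≠ ⊤) (t : ℝ) :
    volume (symFlow t E) ≠ ⊤ := by rwa [volume_symFlow hE hfin]

lemma symFlow_mono {E F : Set ℝ} (hE : MeasurableSet E) (hF : MeasurableSet F)
    (hFf : volume F ≠ ⊤) (h : volume (E \ F) = 0) (t : ℝ) :
    volume (symFlow t E \ symFlow t F) = 0 := by
  unfold symFlow
  split_ifs with h0 h1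
  · exact h
  · have hle : volume E ≤ volume F := measure_mono_ae (ae_le_set.2 h)
    have hle' := ENNReal.toReal_mono hFf hle
    have : intervalStar E ⊆ intervalStar F := Icc_subset_Icc (by linarith) (by linarith)
    rw [sdiff_eq_empty.2 this, measure_empty]
  · have : dil (1 - t) (swept E (1 - t)) ⊆ dil (1 - t) (swept F (1 - t)) :=
      preimage_mono (swept_mono hE hF h _)
    rw [sdiff_eq_empty.2 this, measure_empty]

/-- One half of contractivity, from monotonicity and conservation of measure applied to
`E ∪ F`. -/
lemma symFlow_diff_le {E F : Set ℝ} (hE : MeasurableSet E) (hF : MeasurableSet F)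
    (hEf : volume E ≠ ⊤) (hFf : volume F ≠ ⊤) (t : ℝ) :
    volume (symFlow t E \ symFlow t F) ≤ volume (E \ F) := by
  have hU := hE.union hF
  have hUf : volume (E ∪ F) ≠ ⊤ := (measure_union_lt_top hEf.lt_top hFf.lt_top).ne
  have h1 := symFlow_mono hE hU hUf (by rw [sdiff_eq_empty.2 subset_union_left, measure_empty]) t
  have h2 := symFlow_mono hF hU hUf (by rw [sdiff_eq_empty.2 subset_union_right, measure_empty]) t
  have h3 : volume (symFlow t E \ symFlow t F) ≤
      volume (symFlow t (E ∪ F) \ symFlow t F) := by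
    have hsub : symFlow t E \ symFlow t F ⊆
        (symFlow t (E ∪ F) \ symFlow t F) ∪ (symFlow t E \ symFlow t (E ∪ F)) := by
      rintro x ⟨hx, hx'⟩
      by_cases hxu : x ∈ symFlow t (E ∪ F)
      · exact Or.inl ⟨hxu, hx'⟩
      · exact Or.inr ⟨hx, hxu⟩
    refine (measure_mono hsub).trans ((measure_union_le _ _).trans ?_)
    rw [h1, add_zero]
  refine h3.trans ?_
  have hvF := volume_symFlow hF hFf t
  have hvU := volume_symFlow hU hUf t
  have e1 : volume (symFlow t (E ∪ F) \ symFlow t F) + volume F = volume (E ∪ F) := by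
    rw [← hvU, ← hvF, ← measure_sdiff_add_inter (symFlow t (E ∪ F)) (measurableSet_symFlow hF t)]
    congr 1
    have := measure_inter_add_sdiff (μ := volume) (symFlow t F) (measurableSet_symFlow hU t)
    rw [h2, add_zero] at this
    rw [inter_comm, this]
  have e2 : volume (E \ F) + volume F = volume (E ∪ F) := by
    rw [← union_sdiff_right, ← measure_sdiff_add_inter (E ∪ F) hF]
    congr 2
    rw [union_inter_cancel_right]
  rw [← e2] at e1
  exact ((ENNReal.add_left_inj hFf).1 e1).le

lemma symFlow_contract {E F : Set ℝ} (hE : MeasurableSet E) (hF : MeasurableSet F)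
    (hEf : volume E ≠ ⊤) (hFf : volume F ≠ ⊤) (t : ℝ) :
    volume (symmDiff (symFlow t E) (symFlow t F)) ≤ volume (symmDiff E F) := by
  rw [measure_symmDiff_eq (measurableSet_symFlow hE t).nullMeasurableSet
    (measurableSet_symFlow hF t).nullMeasurableSet,
    measure_symmDiff_eq hE.nullMeasurableSet hF.nullMeasurableSet]
  exact add_le_add (symFlow_diff_le hE hF hEf hFf t) (symFlow_diff_le hF hE hFf hEf t)

lemma symFlow_semigroup {E : Set ℝ} (hE : MeasurableSet E) (hfin : volume E ≠ ⊤) {s t : ℝ}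
    (hs : 0 ≤ s) (hst : s ≤ t) (ht : t ≤ 1) :
    volume (symmDiff (symFlow t E) (symFlow (1 - (1 - t) / (1 - s)) (symFlow s E))) = 0 := by
  rcases ht.eq_or_lt with rfl | ht
  · rw [sub_self, zero_div, sub_zero, symFlow_of_ge le_rfl, symFlow_of_ge le_rfl]
    unfold intervalStar
    rw [volume_symFlow hE hfin]
    simp
  have hs1 : s < 1 := by linarith
  rcases hst.eq_or_lt with rfl | hst
  · rw [div_self (by linarith), sub_self, symFlow_of_le le_rfl]
    simp
  rcases hs.eq_or_lt with rfl | hs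
  · rw [symFlow_of_le le_rfl E]
    simp
  have hα : 0 < 1 - s := by linarith
  set β := (1 - t) / (1 - s) with hβ
  have hβ0 : 0 < β := div_pos (by linarith) hα
  have hβ1 : β < 1 := by rw [hβ, div_lt_one hα]; linarith
  have hmul : (1 - s) * β = 1 - t := by rw [hβ]; field_simp
  rw [symFlow_of_mem (by linarith) ht, symFlow_of_mem hs hs1,
    symFlow_of_mem (by linarith) (by linarith), sub_sub_cancel, swept_dil hα, dil_dil, hmul,
    ← dil_symmDiff, volume_dil (by linarith), symmDiff_comm, ← hmul,
    swept_swept hE hfin hα (by linarith) hβ0 hβ1, mul_zero]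

/-! ### Continuity in time -/

/-- If the sets `B s` have the same finite measure as `A` and almost every point of `A`
eventually lies in `B s`, then `B s` converges to `A` in measure. -/
lemma tendsto_symmDiff {l : Filter ℝ} [l.IsCountablyGenerated] {A : Set ℝ} {B : ℝ → Set ℝ}
    (hA : MeasurableSet A) (hB : ∀ s, MeasurableSet (B s)) (hAf : volume A ≠ ⊤)
    (hv : ∀ s, volume (B s) = volume A)
    (h : ∀ᵐ x ∂(volume : Measure ℝ), x ∈ A → ∀ᶠ s in l, x ∈ B s) :
    Tendsto (fun s => volume (symmDiff (B s) A)) l (nhds 0) := by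
  have h1 : Tendsto (fun s => volume (A \ B s)) l (nhds (volume (∅ : Set ℝ))) := by
    refine tendsto_measure_of_ae_tendsto_indicator l MeasurableSet.empty
      (fun s => hA.diff (hB s)) hA hAf (Eventually.of_forall fun s => sdiff_subset) ?_
    filter_upwards [h] with x hx
    by_cases hxA : x ∈ A
    · filter_upwards [hx hxA] with s hs
      simp [hs]
    · exact Eventually.of_forall fun s => by simp [hxA]
  have h2 : ∀ s, volume (symmDiff (B s) A) = volume (A \ B s) + volume (A \ B s) := by
    intro s
    rw [measure_symmDiff_eq (hB s).nullMeasurableSet hA.nullMeasurableSet]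
    congr 1
    have e1 := measure_sdiff_add_inter (μ := volume) (B s) hA
    have e2 := measure_sdiff_add_inter (μ := volume) A (hB s)
    rw [hv s, ← e2, inter_comm A] at e1
    exact (ENNReal.add_left_inj
      ((measure_mono inter_subset_right).trans_lt hAf.lt_top).ne).1 e1
  simp_rw [h2]
  have := h1.add h1
  simpa using this

/-- The flow at an intermediate time is given by an open condition in `(t, x)`. -/
lemma symFlow_cont_mid {E : Set ℝ} (hE : MeasurableSet E) (hfin : volume E ≠ ⊤) {t : ℝ}
    (h0 : 0 < t) (h1 : t < 1) :
    Tendsto (fun s => volume (symmDiff (symFlow s E) (symFlow t E))) (nhds t) (nhds 0) := by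
  refine tendsto_symmDiff (measurableSet_symFlow hE t) (measurableSet_symFlow hE)
    (volume_symFlow_ne_top hE hfin t)
    (fun s => by rw [volume_symFlow hE hfin, volume_symFlow hE hfin]) (ae_of_all _ fun x hx => ?_)
  rw [symFlow_of_mem h0 h1] at hx
  obtain ⟨y, hy⟩ := hx
  have hne : 1 - t ≠ 0 := by linarith
  have c1 : ContinuousAt (fun s : ℝ => (1 - s) * (y - x / (1 - s)) ^ 2 / 2) t := by
    fun_prop (disch := assumption)
  have c2 : ContinuousAt (fun s : ℝ => tilt E (x / (1 - s)) y) t := by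
    have hc : ContinuousAt (fun s : ℝ => x / (1 - s)) t := by fun_prop (disch := assumption)
    exact ContinuousAt.comp (f := fun s : ℝ => x / (1 - s)) (g := fun z => tilt E z y)
      (continuous_tilt_left hE y).continuousAt hc
  filter_upwards [c1.eventually_lt c2 hy, eventually_gt_nhds h0, eventually_lt_nhds h1]
    with s hs hs0 hs1
  rw [symFlow_of_mem hs0 hs1]
  exact ⟨y, hs⟩

lemma symFlow_cont_zero_open {U : Set ℝ} (hU : IsOpen U) (hfin : volume U ≠ ⊤) :
    Tendsto (fun s => volume (symmDiff (symFlow s U) U)) (nhds 0) (nhds 0) := by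
  have hm := hU.measurableSet
  refine tendsto_symmDiff hm (measurableSet_symFlow hm) hfin
    (fun s => volume_symFlow hm hfin s) (ae_of_all _ fun x hx => ?_)
  have hc : ContinuousAt (fun s : ℝ => x / (1 - s)) 0 := by
    have : (1 : ℝ) - 0 ≠ 0 := by norm_num
    fun_prop (disch := assumption)
  have hmem : ∀ᶠ s in nhds (0 : ℝ), x / (1 - s) ∈ U :=
    hc.eventually (hU.mem_nhds (by simpa using hx))
  filter_upwards [hmem, eventually_lt_nhds (zero_lt_one (α := ℝ))] with s hs hs1
  rcases le_or_gt s 0 with h | h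
  · rwa [symFlow_of_le h]
  · rw [symFlow_of_mem h hs1]
    exact open_subset_swept hU (by linarith) hs

lemma symFlow_cont_zero {E : Set ℝ} (hE : MeasurableSet E) (hfin : volume E ≠ ⊤) :
    Tendsto (fun s => volume (symmDiff (symFlow s E) E)) (nhds 0) (nhds 0) := by
  rw [ENNReal.tendsto_nhds_zero]
  intro ε hε
  have hε3 : ε / 3 ≠ 0 := (ENNReal.div_pos hε.ne' (by norm_num)).ne'
  obtain ⟨U, hEU, hUo, hUf, hUd⟩ := hE.exists_isOpen_sdiff_lt hfin hε3
  have hd : volume (symmDiff E U) ≤ ε / 3 := by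
    rw [Set.symmDiff_def, sdiff_eq_empty.2 hEU, empty_union]
    exact hUd.le
  have h1 := ENNReal.tendsto_nhds_zero.1 (symFlow_cont_zero_open hUo hUf.ne) (ε / 3)
    (pos_iff_ne_zero.2 hε3)
  filter_upwards [h1] with s hs
  calc volume (symmDiff (symFlow s E) E)
      ≤ volume (symmDiff (symFlow s E) (symFlow s U)) + volume (symmDiff (symFlow s U) E) :=
        measure_symmDiff_le _ _ _
    _ ≤ volume (symmDiff (symFlow s E) (symFlow s U)) +
        (volume (symmDiff (symFlow s U) U) + volume (symmDiff U E)) := by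
        gcongr; exact measure_symmDiff_le _ _ _
    _ ≤ ε / 3 + (ε / 3 + ε / 3) := by
        gcongr
        · exact (symFlow_contract hE hUo.measurableSet hfin hUf.ne s).trans hd
        · rwa [symmDiff_comm]
    _ = ε := by rw [← add_assoc, ENNReal.add_thirds]

lemma tilt_ge_right {E : Set ℝ} (hE : MeasurableSet E) {z R y : ℝ} (hz : z ≤ -R) (hR : 0 ≤ R)
    (hy : R ≤ y) : mass E (-R) R * (y - R) ≤ tilt E z y := by
  rw [tilt_add hE z (-R) y, tilt_add hE (-R) R y]
  have h1 := mul_nonneg (mass_nonneg E hz) (by linarith : 0 ≤ y - -R)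
  linarith [tilt_nonneg hE z (-R), tilt_nonneg hE (-R) R, tilt_nonneg hE R y]

lemma tilt_ge_left {E : Set ℝ} (hE : MeasurableSet E) {z R y : ℝ} (hz : R ≤ z) (hR : 0 ≤ R)
    (hy : y ≤ -R) : mass E (-R) R * (-y - R) ≤ tilt E z y := by
  rw [tilt_add hE z R y, tilt_add hE R (-R) y]
  have h1 := mul_nonneg (mass_nonneg E hz) (by linarith : 0 ≤ R - y)
  have e1 := mass_add hE R z R
  have e2 := mass_add hE R (-R) R
  rw [mass_self] at e1 e2
  have e3 : mass E z R = - mass E R z := by linarith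
  have e4 : mass E R (-R) = - mass E (-R) R := by linarith
  rw [e3, e4]
  nlinarith [tilt_nonneg hE z R, tilt_nonneg hE R (-R), tilt_nonneg hE (-R) y]

lemma exists_mass_gt {E : Set ℝ} (hE : MeasurableSet E) (hfin : volume E ≠ ⊤) {c : ℝ}
    (hc : c < (volume E).toReal) : ∃ R, 0 ≤ R ∧ c < mass E (-R) R := by
  have h := tendsto_measure_inter_Ioc E (a := fun n => -(n : ℝ)) (b := fun n => (n : ℝ))
    (fun n => le_rfl) (fun n => le_rfl)
  have h2 := (ENNReal.tendsto_toReal hfin).comp h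
  obtain ⟨n, hn⟩ := (h2.eventually_const_lt hc).exists
  refine ⟨n, n.cast_nonneg, ?_⟩
  rw [mass_eq hE (by linarith [n.cast_nonneg (α := ℝ)])]
  exact hn

/-- When `t → 1` the gap around the centre of mass absorbs everything else. Concretely, at a point `x`
with `|x| < |E| / 2`, the tilt from `x / (1 - t)` to a far point on the other side of the origin is
bounded below using only the part of `E` in a large fixed interval. -/
lemma symFlow_cont_one {E : Set ℝ} (hE : MeasurableSet E) (hfin : volume E ≠ ⊤) :
    Tendsto (fun s => volume (symmDiff (symFlow s E) (intervalStar E))) (nhds 1) (nhds 0) := by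
  refine tendsto_symmDiff measurableSet_Icc (measurableSet_symFlow hE)
    (by rw [volume_intervalStar hfin]; exact hfin)
    (fun s => by rw [volume_symFlow hE hfin, volume_intervalStar hfin]) ?_
  set V := (volume E).toReal with hV
  have hnull : volume ({-V / 2, 0, V / 2} : Set ℝ) = 0 := (Set.toFinite _).measure_zero _
  filter_upwards [measure_eq_zero_iff_ae_notMem.1 hnull] with x hx hxm
  simp only [mem_insert_iff, mem_singleton_iff, not_or] at hx
  obtain ⟨hx1, hx2, hx3⟩ := hx
  have hxl : -V / 2 < x := lt_of_le_of_ne hxm.1 (Ne.symm hx1)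
  have hxr : x < V / 2 := lt_of_le_of_ne hxm.2 hx3
  have hVpos : 0 < V := by linarith
  -- the witness for `x / α` is `± (V / 2) / α`, on the other side of the origin
  have hc : (V / 2 + |x|) ^ 2 / V < V := by
    have hx' : |x| < V / 2 := abs_lt.2 ⟨by linarith, hxr⟩
    rw [div_lt_iff₀ hVpos]
    nlinarith [abs_nonneg x]
  obtain ⟨R, hR, hm⟩ := exists_mass_gt hE hfin hc
  set m := mass E (-R) R
  have hm' : (V / 2 + |x|) ^ 2 / 2 < m * (V / 2 - (1 - 1) * R) := by
    rw [div_lt_iff₀ hVpos] at hm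
    linarith
  have ev1 : ∀ᶠ s in nhds (1 : ℝ), (V / 2 + |x|) ^ 2 / 2 < m * (V / 2 - (1 - s) * R) := by
    have c1 : ContinuousAt (fun s : ℝ => m * (V / 2 - (1 - s) * R)) 1 := by fun_prop
    exact c1.eventually (lt_mem_nhds hm')
  have ev2 : ∀ᶠ s in nhds (1 : ℝ), (1 - s) * R < |x| := by
    have c1 : ContinuousAt (fun s : ℝ => (1 - s) * R) 1 := by fun_prop
    exact c1.eventually (gt_mem_nhds (by simpa using hx2))
  have ev3 : ∀ᶠ s in nhds (1 : ℝ), (1 - s) * R < V / 2 := by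
    have c1 : ContinuousAt (fun s : ℝ => (1 - s) * R) 1 := by fun_prop
    exact c1.eventually (gt_mem_nhds (by simpa using hVpos))
  filter_upwards [ev1, ev2, ev3, eventually_gt_nhds (zero_lt_one (α := ℝ))] with s h1 h2 h3 h4
  rcases le_or_gt 1 s with h | h
  · rwa [symFlow_of_ge h]
  rw [symFlow_of_mem h4 h]
  set α := 1 - s with hα
  have hα0 : 0 < α := by linarith
  have hfinal : α * ((V / 2 + |x|) / α) ^ 2 / 2 < m * (V / 2 / α - R) := by
    have e1 : α * ((V / 2 + |x|) / α) ^ 2 / 2 = (V / 2 + |x|) ^ 2 / 2 / α := by field_simp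
    have e2 : m * (V / 2 / α - R) = m * (V / 2 - α * R) / α := by field_simp
    rw [e1, e2]
    exact div_lt_div_of_pos_right h1 hα0
  have h3' : R ≤ V / 2 / α := by rw [le_div_iff₀ hα0]; linarith
  have h2' : R ≤ |x| / α := by rw [le_div_iff₀ hα0]; linarith
  rcases lt_or_gt_of_ne hx2 with hneg | hpos
  · rw [abs_of_neg hneg] at hfinal h2'
    refine ⟨V / 2 / α, ?_⟩
    have hz : x / α ≤ -R := by rw [neg_div] at h2'; linarith
    refine lt_of_lt_of_le ?_ (tilt_ge_right hE hz hR h3')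
    refine lt_of_eq_of_lt ?_ hfinal
    ring
  · rw [abs_of_pos hpos] at hfinal h2'
    refine ⟨-(V / 2 / α), ?_⟩
    refine lt_of_lt_of_le ?_ (tilt_ge_left hE h2' hR (by linarith))
    rw [neg_neg]
    refine lt_of_eq_of_lt ?_ hfinal
    ring

lemma symFlow_cont {E : Set ℝ} (hE : MeasurableSet E) (hfin : volume E ≠ ⊤) {t : ℝ}
    (ht : t ∈ Icc (0 : ℝ) 1) :
    Tendsto (fun s => volume (symmDiff (symFlow s E) (symFlow t E))) (nhds t) (nhds 0) := by
  rcases ht.1.eq_or_lt with rfl | h0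
  · simp_rw [symFlow_of_le le_rfl E]
    exact symFlow_cont_zero hE hfin
  rcases ht.2.eq_or_lt with rfl | h1
  · simp_rw [symFlow_of_ge le_rfl E]
    exact symFlow_cont_one hE hfin
  exact symFlow_cont_mid hE hfin h0 h1

/-! ### The trilinear form -/

lemma integrable_ind1 {A : Set ℝ} (hA : MeasurableSet A) (hAf : volume A ≠ ⊤) :
    Integrable (ind1 A) := (integrable_indicator_iff hA).2 (integrableOn_const hAf)

lemma integral_ind1 {A : Set ℝ} (hA : MeasurableSet A) : ∫ x, ind1 A x = (volume A).toReal :=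
  integral_indicator_one hA

lemma measurable_T1_integrand {A B C : Set ℝ} (hA : MeasurableSet A) (hB : MeasurableSet B)
    (hC : MeasurableSet C) :
    Measurable fun p : ℝ × ℝ => ind1 A p.1 * ind1 B p.2 * ind1 C (-p.1 - p.2) :=
  (((measurable_ind1 hA).comp measurable_fst).mul ((measurable_ind1 hB).comp measurable_snd)).mul
    ((measurable_ind1 hC).comp (measurable_fst.neg.sub measurable_snd))

lemma integrable_T1 {A B C : Set ℝ} (hA : MeasurableSet A) (hB : MeasurableSet B)
    (hC : MeasurableSet C) (hAf : volume A ≠ ⊤) (hBf : volume B ≠ ⊤) :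
    Integrable fun p : ℝ × ℝ => ind1 A p.1 * ind1 B p.2 * ind1 C (-p.1 - p.2) := by
  have h := (integrable_ind1 hA hAf).mul_prod (integrable_ind1 hB hBf)
  refine Integrable.mono' h (measurable_T1_integrand hA hB hC).aestronglyMeasurable
    (ae_of_all _ fun p => ?_)
  have h1 := mul_nonneg (ind1_nonneg A p.1) (ind1_nonneg B p.2)
  rw [Real.norm_of_nonneg (mul_nonneg h1 (ind1_nonneg C _))]
  exact mul_le_of_le_one_right h1 (ind1_le_one C _)

lemma T1_swap (A B C : Set ℝ) : T1 A B C = T1 B A C := by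
  unfold T1
  rw [Measure.volume_eq_prod, ← integral_prod_swap]
  refine integral_congr_ae (ae_of_all _ fun p => ?_)
  simp only [Prod.fst_swap, Prod.snd_swap]
  rw [show -p.2 - p.1 = -p.1 - p.2 by ring]
  ring

/-- The substitution `(x, y) ↦ (x, -x - y)` preserves planar measure. -/
lemma T1_swap' {A B C : Set ℝ} (hA : MeasurableSet A) (hB : MeasurableSet B)
    (hC : MeasurableSet C) : T1 A B C = T1 A C B := by
  have h1 := measurePreserving_prod_add (volume : Measure ℝ) (volume : Measure ℝ)
  have h2 := (MeasurePreserving.id (volume : Measure ℝ)).prod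
    (Measure.measurePreserving_neg (volume : Measure ℝ))
  have h3 := h2.comp h1
  unfold T1
  rw [Measure.volume_eq_prod, ← h3.map_eq, integral_map h3.measurable.aemeasurable
    (measurable_T1_integrand hA hB hC).aestronglyMeasurable, h3.map_eq]
  refine integral_congr_ae (ae_of_all _ fun p => ?_)
  simp only [Function.comp, Prod.map, id]
  rw [show -p.1 - -(p.1 + p.2) = p.2 by ring, show -(p.1 + p.2) = -p.1 - p.2 by ring]
  ring

lemma ind1_sub_le (A A' : Set ℝ) (x : ℝ) : ind1 A x ≤ ind1 A' x + ind1 (symmDiff A A') x := by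
  by_cases h : x ∈ A
  · by_cases h' : x ∈ A'
    · rw [ind1_of_mem h, ind1_of_mem h']
      linarith [ind1_nonneg (symmDiff A A') x]
    · rw [ind1_of_mem h, ind1_of_notMem h', ind1_of_mem (Or.inl ⟨h, h'⟩)]
      simp
  · rw [ind1_of_notMem h]
    exact add_nonneg (ind1_nonneg _ _) (ind1_nonneg _ _)

lemma symmDiff_ne_top {A B : Set ℝ} (hA : volume A ≠ ⊤) (hB : volume B ≠ ⊤) :
    volume (symmDiff A B) ≠ ⊤ := by
  refine ((measure_mono ?_).trans_lt (measure_union_lt_top hA.lt_top hB.lt_top)).ne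
  exact symmDiff_le_sup

lemma T1_le_fst {A A' B C : Set ℝ} (hA : MeasurableSet A) (hA' : MeasurableSet A')
    (hB : MeasurableSet B) (hC : MeasurableSet C) (hAf : volume A ≠ ⊤) (hAf' : volume A' ≠ ⊤)
    (hBf : volume B ≠ ⊤) :
    T1 A B C ≤ T1 A' B C + (volume (symmDiff A A')).toReal * (volume B).toReal := by
  have hD := hA.symmDiff hA'
  have hDf := symmDiff_ne_top hAf hAf'
  rw [← integral_ind1 hD, ← integral_ind1 hB, ← integral_prod_mul]
  have hi := (integrable_ind1 hD hDf).mul_prod (integrable_ind1 hB hBf)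
  unfold T1
  rw [← Measure.volume_eq_prod] at hi ⊢
  rw [← integral_add (integrable_T1 hA' hB hC hAf' hBf) hi]
  refine integral_mono (integrable_T1 hA hB hC hAf hBf)
    ((integrable_T1 hA' hB hC hAf' hBf).add hi) fun p => ?_
  have h0 := ind1_sub_le A A' p.1
  have h1 := mul_nonneg (ind1_nonneg (symmDiff A A') p.1) (ind1_nonneg B p.2)
  have h2 := ind1_nonneg C (-p.1 - p.2)
  have h3 := ind1_le_one C (-p.1 - p.2)
  have h4 := ind1_nonneg B p.2
  have h5 := mul_le_mul_of_nonneg_right h0 (mul_nonneg h4 h2)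
  have h6 := mul_le_of_le_one_right h1 h3
  beta_reduce
  nlinarith

lemma T1_le {A A' B B' C C' : Set ℝ} (hA : MeasurableSet A) (hA' : MeasurableSet A')
    (hB : MeasurableSet B) (hB' : MeasurableSet B') (hC : MeasurableSet C)
    (hC' : MeasurableSet C') (hAf : volume A ≠ ⊤) (hAf' : volume A' ≠ ⊤)
    (hBf : volume B ≠ ⊤) (hBf' : volume B' ≠ ⊤) (hCf : volume C ≠ ⊤) (hCf' : volume C' ≠ ⊤) :
    T1 A B C ≤ T1 A' B' C' + ((volume (symmDiff A A')).toReal * (volume B).toReal +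
      (volume (symmDiff B B')).toReal * (volume A').toReal +
      (volume (symmDiff C C')).toReal * (volume A').toReal) := by
  have h1 := T1_le_fst hA hA' hB hC hAf hAf' hBf
  have h2 := T1_le_fst hB hB' hA' hC hBf hBf' hAf'
  have h3 := T1_le_fst hC hC' hA' hB' hCf hCf' hAf'
  rw [T1_swap B, T1_swap B'] at h2
  rw [T1_swap C, T1_swap C', T1_swap' hA' hC hB', T1_swap' hA' hC' hB'] at h3
  linarith

/-- Continuity of the trilinear form with respect to the measure of the symmetric difference. -/
lemma tendsto_T1 {ι : Type*} {l : Filter ι} {A B C : ι → Set ℝ} {A' B' C' : Set ℝ}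
    (hA : ∀ i, MeasurableSet (A i)) (hA' : MeasurableSet A') (hB : ∀ i, MeasurableSet (B i))
    (hB' : MeasurableSet B') (hC : ∀ i, MeasurableSet (C i)) (hC' : MeasurableSet C')
    (hAf : ∀ i, volume (A i) ≠ ⊤) (hAf' : volume A' ≠ ⊤) (hBf : ∀ i, volume (B i) ≠ ⊤)
    (hBf' : volume B' ≠ ⊤) (hCf : ∀ i, volume (C i) ≠ ⊤) (hCf' : volume C' ≠ ⊤)
    (tA : Tendsto (fun i => volume (symmDiff (A i) A')) l (nhds 0))
    (tB : Tendsto (fun i => volume (symmDiff (B i) B')) l (nhds 0))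
    (tC : Tendsto (fun i => volume (symmDiff (C i) C')) l (nhds 0)) :
    Tendsto (fun i => T1 (A i) (B i) (C i)) l (nhds (T1 A' B' C')) := by
  have rA : Tendsto (fun i => (volume (symmDiff (A i) A')).toReal) l (nhds 0) := by
    simpa [Function.comp_def] using (ENNReal.tendsto_toReal ENNReal.zero_ne_top).comp tA
  have rB : Tendsto (fun i => (volume (symmDiff (B i) B')).toReal) l (nhds 0) := by
    simpa [Function.comp_def] using (ENNReal.tendsto_toReal ENNReal.zero_ne_top).comp tB
  have rC : Tendsto (fun i => (volume (symmDiff (C i) C')).toReal) l (nhds 0) := by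
    simpa [Function.comp_def] using (ENNReal.tendsto_toReal ENNReal.zero_ne_top).comp tC
  have key : ∀ {X Y : Set ℝ}, MeasurableSet X → volume X ≠ ⊤ → volume Y ≠ ⊤ →
      (volume X).toReal ≤ (volume Y).toReal + (volume (symmDiff X Y)).toReal := by
    intro X Y _ hXf hYf
    rw [← ENNReal.toReal_add hYf (symmDiff_ne_top hXf hYf)]
    refine ENNReal.toReal_mono (ENNReal.add_ne_top.2 ⟨hYf, symmDiff_ne_top hXf hYf⟩)
      ((measure_mono fun x hx => ?_).trans (measure_union_le _ _))
    by_cases hY : x ∈ Y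
    · exact Or.inl hY
    · exact Or.inr (Or.inl ⟨hx, hY⟩)
  set a := fun i => (volume (symmDiff (A i) A')).toReal with ha
  set b := fun i => (volume (symmDiff (B i) B')).toReal with hb
  set c := fun i => (volume (symmDiff (C i) C')).toReal with hc
  set VA := (volume A').toReal
  set VB := (volume B').toReal
  have e : Tendsto (fun i => a i * (VB + b i) + b i * (VA + a i) + c i * (VA + a i)) l
      (nhds 0) := by
    have := ((rA.mul (rB.const_add VB)).add (rB.mul (rA.const_add VA))).add
      (rC.mul (rA.const_add VA))
    simpa using this
  rw [tendsto_iff_dist_tendsto_zero]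
  refine squeeze_zero (fun _ => dist_nonneg) (fun i => ?_) e
  rw [Real.dist_eq, abs_sub_le_iff]
  have h1 := T1_le (hA i) hA' (hB i) hB' (hC i) hC' (hAf i) hAf' (hBf i) hBf' (hCf i) hCf'
  have h2 := T1_le hA' (hA i) hB' (hB i) hC' (hC i) hAf' (hAf i) hBf' (hBf i) hCf' (hCf i)
  rw [symmDiff_comm A', symmDiff_comm B', symmDiff_comm C'] at h2
  have kA := key (hA i) (hAf i) hAf'
  have kB := key (hB i) (hBf i) hBf'
  have a0 : 0 ≤ a i := ENNReal.toReal_nonneg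
  have b0 : 0 ≤ b i := ENNReal.toReal_nonneg
  have c0 : 0 ≤ c i := ENNReal.toReal_nonneg
  change T1 (A i) (B i) (C i) ≤ T1 A' B' C' +
    (a i * (volume (B i)).toReal + b i * VA + c i * VA) at h1
  change T1 A' B' C' ≤ T1 (A i) (B i) (C i) +
    (a i * VB + b i * (volume (A i)).toReal + c i * (volume (A i)).toReal) at h2
  change (volume (A i)).toReal ≤ VA + a i at kA
  change (volume (B i)).toReal ≤ VB + b i at kB
  have m1 := mul_le_mul_of_nonneg_left kB a0
  have m2 := mul_le_mul_of_nonneg_left kA b0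
  have m3 := mul_le_mul_of_nonneg_left kA c0
  have := mul_nonneg a0 b0
  have := mul_nonneg c0 a0
  constructor <;> nlinarith

lemma T1_congr {A A' B B' C C' : Set ℝ} (hA : A =ᵐ[volume] A') (hB : B =ᵐ[volume] B')
    (hC : MeasurableSet C) (hC' : MeasurableSet C') (hB' : MeasurableSet B')
    (hA' : MeasurableSet A') (hCC : C =ᵐ[volume] C') :
    T1 A B C = T1 A' B' C' := by
  have ind : ∀ {X Y : Set ℝ}, X =ᵐ[volume] Y → ind1 X =ᵐ[volume] ind1 Y := fun h =>
    indicator_ae_eq_of_ae_eq_set h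
  have h1 : T1 A B C = T1 A' B' C := by
    unfold T1
    refine integral_congr_ae ?_
    rw [Measure.volume_eq_prod]
    filter_upwards [Measure.quasiMeasurePreserving_fst.ae_eq_comp (ind hA),
      Measure.quasiMeasurePreserving_snd.ae_eq_comp (ind hB)] with p hp hq
    simp only [Function.comp] at hp hq
    rw [hp, hq]
  have h2 : T1 A' C B' = T1 A' C' B' := by
    unfold T1
    refine integral_congr_ae ?_
    rw [Measure.volume_eq_prod]
    filter_upwards [Measure.quasiMeasurePreserving_snd.ae_eq_comp (ind hCC)] with p hq
    simp only [Function.comp] at hq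
    rw [hq]
  rw [h1, T1_swap' hA' hB' hC, h2, T1_swap' hA' hC' hB']

lemma ind1_biUnion {ι : Type*} (s : Finset ι) {I : ι → Set ℝ}
    (hd : (s : Set ι).PairwiseDisjoint I) (x : ℝ) :
    ind1 (⋃ i ∈ s, I i) x = ∑ i ∈ s, ind1 (I i) x := by
  have := Finset.indicator_biUnion s I (f := (1 : ℝ → ℝ)) hd
  exact congrFun this x

lemma T1_biUnion_fst {ι : Type*} (s : Finset ι) {I : ι → Set ℝ}
    (hd : (s : Set ι).PairwiseDisjoint I) (hI : ∀ i, MeasurableSet (I i))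
    (hIf : ∀ i, volume (I i) ≠ ⊤) {B C : Set ℝ} (hB : MeasurableSet B) (hBf : volume B ≠ ⊤)
    (hC : MeasurableSet C) :
    T1 (⋃ i ∈ s, I i) B C = ∑ i ∈ s, T1 (I i) B C := by
  unfold T1
  rw [← integral_finsetSum s fun i _ => integrable_T1 (hI i) hB hC (hIf i) hBf]
  simp_rw [ind1_biUnion s hd, Finset.sum_mul]

lemma volume_biUnion_ne_top {ι : Type*} (s : Finset ι) {I : ι → Set ℝ}
    (hIf : ∀ i, volume (I i) ≠ ⊤) : volume (⋃ i ∈ s, I i) ≠ ⊤ :=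
  (measure_biUnion_lt_top s.finite_toSet fun i _ => (hIf i).lt_top).ne

lemma T1_biUnion {ι : Type*} (s₁ s₂ s₃ : Finset ι) {I : ι → Set ℝ}
    (hd₁ : (s₁ : Set ι).PairwiseDisjoint I) (hd₂ : (s₂ : Set ι).PairwiseDisjoint I)
    (hd₃ : (s₃ : Set ι).PairwiseDisjoint I) (hI : ∀ i, MeasurableSet (I i))
    (hIf : ∀ i, volume (I i) ≠ ⊤) :
    T1 (⋃ i ∈ s₁, I i) (⋃ i ∈ s₂, I i) (⋃ i ∈ s₃, I i) =
      ∑ i ∈ s₁, ∑ j ∈ s₂, ∑ k ∈ s₃, T1 (I i) (I j) (I k) := by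
  have hm : ∀ s : Finset ι, MeasurableSet (⋃ i ∈ s, I i) := fun s =>
    s.measurableSet_biUnion fun i _ => hI i
  rw [T1_biUnion_fst s₁ hd₁ hI hIf (hm _) (volume_biUnion_ne_top _ hIf) (hm _)]
  refine Finset.sum_congr rfl fun i _ => ?_
  rw [T1_swap, T1_biUnion_fst s₂ hd₂ hI hIf (hI i) (hIf i) (hm _)]
  refine Finset.sum_congr rfl fun j _ => ?_
  rw [T1_swap, T1_swap' (hI i) (hI j) (hm _), T1_swap,
    T1_biUnion_fst s₃ hd₃ hI hIf (hI i) (hIf i) (hI j)]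
  refine Finset.sum_congr rfl fun k _ => ?_
  rw [T1_swap, T1_swap' (hI i) (hI k) (hI j)]

/-! ### Three intervals -/

/-- Averaging over a symmetric window preserves even functions that decrease on `[0, ∞)`. -/
lemma window_even_anti {k : ℝ → ℝ} (hk : ∀ a b, IntervalIntegrable k volume a b)
    (he : ∀ x, k (-x) = k x) (ha : ∀ x y, 0 ≤ x → x ≤ y → k y ≤ k x) {r : ℝ} (hr : 0 ≤ r) :
    (∀ w, ∫ u in (-w - r)..(-w + r), k u = ∫ u in (w - r)..(w + r), k u) ∧
    ∀ c d, 0 ≤ c → c ≤ d → ∫ u in (d - r)..(d + r), k u ≤ ∫ u in (c - r)..(c + r), k u := by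
  constructor
  · intro w
    have := intervalIntegral.integral_comp_neg (a := w - r) (b := w + r) k
    simp_rw [he] at this
    rw [this]
    congr 1 <;> ring
  · intro c d hc hcd
    have h1 := intervalIntegral.integral_add_adjacent_intervals (hk (c - r) (d - r))
      (hk (d - r) (d + r))
    have h2 := intervalIntegral.integral_add_adjacent_intervals (hk (c - r) (c + r))
      (hk (c + r) (d + r))
    have h3 := intervalIntegral.integral_comp_sub_right (a := c) (b := d) k r
    have h4 := intervalIntegral.integral_comp_add_right (a := c) (b := d) k r
    have i3 : IntervalIntegrable (fun x => k (x - r)) volume c d := by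
      have := (hk (c - r) (d - r)).comp_sub_right r
      simpa using this
    have i4 : IntervalIntegrable (fun x => k (x + r)) volume c d := by
      have := (hk (c + r) (d + r)).comp_add_right r
      simpa using this
    have h5 : ∫ u in c..d, k (u + r) ≤ ∫ u in c..d, k (u - r) := by
      refine intervalIntegral.integral_mono_on hcd i4 i3 fun u hu => ?_
      have hu0 : 0 ≤ u := hc.trans hu.1
      rcases le_total 0 (u - r) with h | h
      · exact ha _ _ h (by linarith)
      · rw [← he (u - r)]
        exact ha _ _ (by linarith) (by linarith)
    linarith

/-- The trilinear form of three intervals is a function of the sum of their centres. -/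
lemma T1_intervals {r₁ r₂ r₃ : ℝ} (h₁ : 0 ≤ r₁) (h₂ : 0 ≤ r₂) (c₁ c₂ c₃ : ℝ) :
    T1 (Ioo (c₁ - r₁) (c₁ + r₁)) (Ioo (c₂ - r₂) (c₂ + r₂)) (Ioo (c₃ - r₃) (c₃ + r₃)) =
      ∫ v in (c₁ + c₂ + c₃ - r₁)..(c₁ + c₂ + c₃ + r₁), ∫ u in (v - r₂)..(v + r₂),
        ind1 (Ioo (-r₃) r₃) u := by
  have hs : ∀ (c r : ℝ), 0 ≤ r → ∀ f : ℝ → ℝ,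
      ∫ x, ind1 (Ioo (c - r) (c + r)) x * f x = ∫ x in (c - r)..(c + r), f x := by
    intro c r hr f
    rw [intervalIntegral.integral_of_le (by linarith), integral_Ioc_eq_integral_Ioo, ← integral_indicator measurableSet_Ioo]
    refine integral_congr_ae (ae_of_all _ fun x => ?_)
    by_cases hx : x ∈ Ioo (c - r) (c + r)
    · simp only [ind1_of_mem hx, indicator_of_mem hx, one_mul]
    · simp only [ind1_of_notMem hx, indicator_of_notMem hx, zero_mul]
  have hT := integrable_T1 (measurableSet_Ioo (a := c₁ - r₁) (b := c₁ + r₁))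
    (measurableSet_Ioo (a := c₂ - r₂) (b := c₂ + r₂))
    (measurableSet_Ioo (a := c₃ - r₃) (b := c₃ + r₃)) measure_Ioo_lt_top.ne measure_Ioo_lt_top.ne
  unfold T1
  rw [Measure.volume_eq_prod] at hT ⊢
  rw [integral_prod _ hT]
  simp only [mul_assoc]
  simp_rw [integral_const_mul, hs c₂ r₂ h₂]
  rw [hs c₁ r₁ h₁]
  have e : ∀ x, ∫ y in (c₂ - r₂)..(c₂ + r₂), ind1 (Ioo (c₃ - r₃) (c₃ + r₃)) (-x - y) =
      ∫ u in (x + (c₂ + c₃) - r₂)..(x + (c₂ + c₃) + r₂), ind1 (Ioo (-r₃) r₃) u := by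
    intro x
    have h := intervalIntegral.integral_comp_add_right (a := c₂ - r₂) (b := c₂ + r₂)
      (ind1 (Ioo (-r₃) r₃)) (x + c₃)
    rw [show x + (c₂ + c₃) - r₂ = c₂ - r₂ + (x + c₃) by ring,
      show x + (c₂ + c₃) + r₂ = c₂ + r₂ + (x + c₃) by ring, ← h]
    refine intervalIntegral.integral_congr fun y _ => ?_
    by_cases hy : -x - y ∈ Ioo (c₃ - r₃) (c₃ + r₃)
    · have : y + (x + c₃) ∈ Ioo (-r₃) r₃ := by
        constructor <;> linarith [hy.1, hy.2]
      simp only [ind1_of_mem hy, ind1_of_mem this]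
    · have : y + (x + c₃) ∉ Ioo (-r₃) r₃ := fun h' => hy (by
        constructor <;> linarith [h'.1, h'.2])
      simp only [ind1_of_notMem hy, ind1_of_notMem this]
  simp_rw [e]
  rw [intervalIntegral.integral_comp_add_right (a := c₁ - r₁) (b := c₁ + r₁)
    (fun v => ∫ u in (v - r₂)..(v + r₂), ind1 (Ioo (-r₃) r₃) u) (c₂ + c₃)]
  congr 1 <;> ring

/-- Moving the centres of three intervals towards the origin at a common rate increases the
trilinear form. -/
lemma T1_intervals_mono {r₁ r₂ r₃ : ℝ} (h₁ : 0 ≤ r₁) (h₂ : 0 ≤ r₂) (c₁ c₂ c₃ : ℝ)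
    {α : ℝ} (h0 : 0 ≤ α) (h1 : α ≤ 1) :
    T1 (Ioo (c₁ - r₁) (c₁ + r₁)) (Ioo (c₂ - r₂) (c₂ + r₂)) (Ioo (c₃ - r₃) (c₃ + r₃)) ≤
    T1 (Ioo (α * c₁ - r₁) (α * c₁ + r₁)) (Ioo (α * c₂ - r₂) (α * c₂ + r₂))
      (Ioo (α * c₃ - r₃) (α * c₃ + r₃)) := by
  rw [T1_intervals h₁ h₂, T1_intervals h₁ h₂]
  set k := ind1 (Ioo (-r₃) r₃) with hk
  have ki : ∀ a b, IntervalIntegrable k volume a b := fun a b => ii_ind1 measurableSet_Ioo a b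
  have ke : ∀ x, k (-x) = k x := by
    intro x
    by_cases hx : x ∈ Ioo (-r₃) r₃
    · have : -x ∈ Ioo (-r₃) r₃ := ⟨by linarith [hx.2], by linarith [hx.1]⟩
      rw [hk, ind1_of_mem hx, ind1_of_mem this]
    · have : -x ∉ Ioo (-r₃) r₃ := fun h => hx ⟨by linarith [h.2], by linarith [h.1]⟩
      rw [hk, ind1_of_notMem hx, ind1_of_notMem this]
  have ka : ∀ x y, 0 ≤ x → x ≤ y → k y ≤ k x := by
    intro x y hx hxy
    by_cases hy : y ∈ Ioo (-r₃) r₃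
    · have : x ∈ Ioo (-r₃) r₃ := ⟨by linarith [hy.1, hy.2], by linarith [hy.2]⟩
      rw [hk, ind1_of_mem hy, ind1_of_mem this]
    · rw [hk, ind1_of_notMem hy]
      exact ind1_nonneg _ _
  obtain ⟨Ke, Ka⟩ := window_even_anti ki ke ka h₂
  have Kc : Continuous fun v => ∫ u in (v - r₂)..(v + r₂), k u := by
    have hc := intervalIntegral.continuous_primitive ki 0
    have : (fun v => ∫ u in (v - r₂)..(v + r₂), k u) =
        fun v => (∫ u in (0 : ℝ)..(v + r₂), k u) - ∫ u in (0 : ℝ)..(v - r₂), k u := by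
      ext v
      rw [intervalIntegral.integral_interval_sub_left (ki _ _) (ki _ _)]
    rw [this]
    exact (hc.comp (continuous_id.add continuous_const)).sub
      (hc.comp (continuous_id.sub continuous_const))
  obtain ⟨Le, La⟩ := window_even_anti (fun a b => Kc.intervalIntegrable a b) Ke Ka h₁
  set L := fun w => ∫ v in (w - r₁)..(w + r₁), ∫ u in (v - r₂)..(v + r₂), k u with hL
  change L (c₁ + c₂ + c₃) ≤ L (α * c₁ + α * c₂ + α * c₃)
  rw [show α * c₁ + α * c₂ + α * c₃ = α * (c₁ + c₂ + c₃) by ring]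
  generalize c₁ + c₂ + c₃ = c
  rcases le_total 0 c with hc | hc
  · exact La _ _ (mul_nonneg h0 hc) (mul_le_of_le_one_left hc h1)
  · have e1 : L (-c) = L c := Le c
    have e2 : L (-(α * c)) = L (α * c) := Le (α * c)
    rw [← e1, ← e2]
    refine La _ _ ?_ ?_
    · nlinarith
    · nlinarith

/-! ### Finite unions of intervals -/

/-- The union of the open intervals with endpoints listed in `s`. -/
def fu (s : Finset (ℝ × ℝ)) : Set ℝ := ⋃ p ∈ s, Ioo p.1 p.2

lemma mem_fu {s : Finset (ℝ × ℝ)} {x : ℝ} : x ∈ fu s ↔ ∃ p ∈ s, p.1 < x ∧ x < p.2 := by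
  simp only [fu, mem_iUnion, mem_Ioo, exists_prop]

lemma isOpen_fu (s : Finset (ℝ × ℝ)) : IsOpen (fu s) :=
  isOpen_biUnion fun _ _ => isOpen_Ioo

lemma measurableSet_fu (s : Finset (ℝ × ℝ)) : MeasurableSet (fu s) := (isOpen_fu s).measurableSet

lemma volume_fu_ne_top (s : Finset (ℝ × ℝ)) : volume (fu s) ≠ ⊤ :=
  volume_biUnion_ne_top s fun _ => measure_Ioo_lt_top.ne

/-- Nested sets that differ by finitely many points agree almost everywhere. -/
lemma ae_eq_of_finite {A B F : Set ℝ} (hF : F.Finite) (hAB : A ⊆ B) (h : B \ F ⊆ A) :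
    A =ᵐ[volume] B := by
  refine (LE.le.eventuallyLE hAB).antisymm (ae_le_set.2 ?_)
  refine measure_mono_null (fun x hx => ?_) (hF.measure_zero volume)
  by_contra hxF
  exact hx.2 (h ⟨hx.1, hxF⟩)

/-- Up to a null set, a finite union of intervals is a union of nonempty intervals with
pairwise disjoint closures: a representation with the fewest intervals has this property. -/
lemma exists_separated (s : Finset (ℝ × ℝ)) : ∃ s' : Finset (ℝ × ℝ), fu s' =ᵐ[volume] fu s ∧
    (∀ p ∈ s', p.1 < p.2) ∧ ∀ p ∈ s', ∀ q ∈ s', p ≠ q → p.2 < q.1 ∨ q.2 < p.1 := by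
  induction hn : s.card using Nat.strong_induction_on generalizing s with
  | _ n ih =>
  by_cases h1 : ∀ p ∈ s, p.1 < p.2
  swap
  · push Not at h1
    obtain ⟨p, hp, hp2⟩ := h1
    obtain ⟨s', hs', h⟩ := ih _ (hn ▸ Finset.card_erase_lt_of_mem hp) (s.erase p) rfl
    refine ⟨s', hs'.trans ?_, h⟩
    have : fu (s.erase p) = fu s := by
      ext x
      rw [mem_fu, mem_fu]
      constructor
      · rintro ⟨q, hq, h⟩
        exact ⟨q, Finset.mem_of_mem_erase hq, h⟩
      · rintro ⟨q, hq, h⟩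
        refine ⟨q, Finset.mem_erase.2 ⟨?_, hq⟩, h⟩
        rintro rfl
        linarith
    exact Filter.EventuallyEq.of_eq this
  by_cases h2 : ∀ p ∈ s, ∀ q ∈ s, p ≠ q → p.2 < q.1 ∨ q.2 < p.1
  · exact ⟨s, ae_eq_rfl, h1, h2⟩
  push Not at h2
  obtain ⟨p, hp, q, hq, hne, hpq, hqp⟩ := h2
  have hp1 := h1 p hp
  have hq1 := h1 q hq
  set m : ℝ × ℝ := (min p.1 q.1, max p.2 q.2) with hm
  set s₁ := insert m ((s.erase p).erase q) with hs₁
  have hqe : q ∈ s.erase p := Finset.mem_erase.2 ⟨hne.symm, hq⟩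
  have hc : s₁.card < n := by
    have a1 : s₁.card ≤ _ := Finset.card_insert_le m ((s.erase p).erase q)
    have a2 := Finset.card_erase_add_one hqe
    have a3 := Finset.card_erase_add_one hp
    omega
  obtain ⟨s', hs', h⟩ := ih _ hc s₁ rfl
  refine ⟨s', hs'.trans (Filter.EventuallyEq.symm ?_), h⟩
  refine ae_eq_of_finite (F := {p.1, p.2, q.1, q.2}) (Set.toFinite _) ?_ ?_
  · intro x hx
    obtain ⟨w, hw, hx1, hx2⟩ := mem_fu.1 hx
    rw [mem_fu]
    by_cases hwp : w = p
    · subst hwp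
      exact ⟨m, Finset.mem_insert_self _ _, (min_le_left _ _).trans_lt hx1,
        hx2.trans_le (le_max_left _ _)⟩
    by_cases hwq : w = q
    · subst hwq
      exact ⟨m, Finset.mem_insert_self _ _, (min_le_right _ _).trans_lt hx1,
        hx2.trans_le (le_max_right _ _)⟩
    exact ⟨w, Finset.mem_insert_of_mem
      (Finset.mem_erase.2 ⟨hwq, Finset.mem_erase.2 ⟨hwp, hw⟩⟩), hx1, hx2⟩
  · rintro x ⟨hx, hxF⟩
    simp only [mem_insert_iff, mem_singleton_iff, not_or] at hxF
    obtain ⟨n1, n2, n3, n4⟩ := hxF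
    obtain ⟨w, hw, hx1, hx2⟩ := mem_fu.1 hx
    rw [mem_fu]
    rcases Finset.mem_insert.1 hw with rfl | hw
    · rcases lt_or_gt_of_ne n2 with g | g
      · rcases lt_or_gt_of_ne n1 with g' | g'
        · refine ⟨q, hq, ?_, by linarith⟩
          rcases min_lt_iff.1 hx1 with k | k
          · linarith
          · exact k
        · exact ⟨p, hp, g', g⟩
      · refine ⟨q, hq, by linarith, ?_⟩
        rcases lt_max_iff.1 hx2 with k | k
        · linarith
        · exact k
    · exact ⟨w, Finset.mem_of_mem_erase (Finset.mem_of_mem_erase hw), hx1, hx2⟩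

/-- The swept set of a finite union of intervals is again one: every gap carries positive mass,
hence swallows one of the intervals whole. -/
lemma swept_fu (s : Finset (ℝ × ℝ)) {α : ℝ} (h0 : 0 < α) (h1 : α < 1) :
    ∃ s', swept (fu s) α = fu s' := by
  classical
  have hE := measurableSet_fu s
  have hfin := volume_fu_ne_top s
  have hsub := open_subset_swept (isOpen_fu s) h1
  have hg : ∀ p : ℝ × ℝ, ∃ g : ℝ × ℝ, p ∈ s.filter (fun p => p.1 < p.2) →
      IsGap (fu s) α g.1 g.2 ∧ (p.1 + p.2) / 2 ∈ Ioo g.1 g.2 := by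
    intro p
    by_cases hp : p ∈ s.filter (fun p => p.1 < p.2)
    · have hp' := Finset.mem_filter.1 hp
      have hm : (p.1 + p.2) / 2 ∈ fu s :=
        mem_fu.2 ⟨p, hp'.1, by linarith [hp'.2], by linarith [hp'.2]⟩
      obtain ⟨a, b, h⟩ := exists_gap hE hfin h0 (hsub hm)
      exact ⟨(a, b), fun _ => h⟩
    · exact ⟨p, fun h => absurd h hp⟩
  choose g hg using hg
  refine ⟨(s.filter fun p => p.1 < p.2).image g, Subset.antisymm ?_ ?_⟩
  · intro z hz
    obtain ⟨a, b, hgap, hzab⟩ := exists_gap hE hfin h0 hz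
    have hmass := gap_mass hE hfin h0 hgap.1.le hgap.2.1 hgap.2.2.1 hgap.2.2.2
    obtain ⟨x, hxU, hxab⟩ : (fu s ∩ Ioc a b).Nonempty := by
      by_contra hne
      rw [not_nonempty_iff_eq_empty] at hne
      rw [mass_eq hE hgap.1.le, hne] at hmass
      have := mul_pos h0 (sub_pos.2 hgap.1)
      simp only [measure_empty, ENNReal.toReal_zero] at hmass
      linarith
    have hxb : x < b := lt_of_le_of_ne hxab.2 (by rintro rfl; exact hgap.2.2.1 (hsub hxU))
    obtain ⟨p, hp, hp1, hp2⟩ := mem_fu.1 hxU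
    have ha : a ≤ p.1 := by
      by_contra h
      exact hgap.2.1 (hsub (mem_fu.2 ⟨p, hp, not_le.1 h, hxab.1.trans hp2⟩))
    have hb : p.2 ≤ b := by
      by_contra h
      exact hgap.2.2.1 (hsub (mem_fu.2 ⟨p, hp, hp1.trans hxb, not_le.1 h⟩))
    have hpf : p ∈ s.filter (fun p => p.1 < p.2) := Finset.mem_filter.2 ⟨hp, hp1.trans hp2⟩
    obtain ⟨hg1, hg2⟩ := hg p hpf
    obtain ⟨e1, e2⟩ := hgap.eq_of_mem hg1 (x := (p.1 + p.2) / 2)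
      ⟨by linarith, by linarith⟩ hg2
    exact mem_fu.2 ⟨g p, Finset.mem_image_of_mem g hpf, e1 ▸ hzab.1, e2 ▸ hzab.2⟩
  · intro z hz
    obtain ⟨w, hw, hz1, hz2⟩ := mem_fu.1 hz
    obtain ⟨p, hp, rfl⟩ := Finset.mem_image.1 hw
    exact (hg p hp).1.2.2.2 ⟨hz1, hz2⟩

lemma dil_fu {α : ℝ} (hα : 0 < α) (s : Finset (ℝ × ℝ)) : ∃ s', dil α (fu s) = fu s' := by
  classical
  refine ⟨s.image fun p => (α * p.1, α * p.2), ?_⟩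
  ext x
  simp only [dil, mem_preimage, mem_fu, Finset.mem_image, exists_exists_and_eq_and]
  refine exists_congr fun p => and_congr_right fun _ => ?_
  rw [lt_div_iff₀ hα, div_lt_iff₀ hα, mul_comm p.1, mul_comm p.2]

lemma ae_eq_iff_symmDiff {A B : Set ℝ} : A =ᵐ[volume] B ↔ volume (symmDiff A B) = 0 :=
  measure_symmDiff_eq_zero_iff.symm

lemma symFlow_congr {E F : Set ℝ} (hE : MeasurableSet E) (hF : MeasurableSet F)
    (hEf : volume E ≠ ⊤) (hFf : volume F ≠ ⊤) (h : E =ᵐ[volume] F) (t : ℝ) :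
    symFlow t E =ᵐ[volume] symFlow t F := by
  rw [ae_eq_iff_symmDiff] at h ⊢
  exact le_antisymm (h ▸ symFlow_contract hE hF hEf hFf t) zero_le

lemma symFlow_fu (s : Finset (ℝ × ℝ)) (t : ℝ) : ∃ s', symFlow t (fu s) =ᵐ[volume] fu s' := by
  rcases le_or_gt t 0 with h0 | h0
  · exact ⟨s, Filter.EventuallyEq.of_eq (symFlow_of_le h0 _)⟩
  rcases le_or_gt 1 t with h1 | h1
  · rw [symFlow_of_ge h1]
    refine ⟨{(-(volume (fu s)).toReal / 2, (volume (fu s)).toReal / 2)}, ?_⟩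
    simp only [fu, Finset.mem_singleton, iUnion_iUnion_eq_left]
    exact Ioo_ae_eq_Icc.symm
  · rw [symFlow_of_mem h0 h1]
    obtain ⟨s', hs'⟩ := swept_fu s (α := 1 - t) (by linarith) (by linarith)
    rw [hs']
    obtain ⟨sr, hsr⟩ := dil_fu (α := 1 - t) (by linarith) s'
    exact ⟨sr, Filter.EventuallyEq.of_eq hsr⟩

/-! ### The flow of an interval, and of separated intervals for short times -/

lemma tilt_Ioo {l u a b : ℝ} (hlu : l ≤ u) (ha : a ≤ l) (hb : u ≤ b) :
    tilt (Ioo l u) a b = (u - l) * (b - (l + u) / 2) := by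
  unfold tilt
  have e : ∀ s, (b - s) * ind1 (Ioo l u) s = (Ioo l u).indicator (fun s => b - s) s := by
    intro s
    by_cases hs : s ∈ Ioo l u
    · rw [ind1_of_mem hs, indicator_of_mem hs, mul_one]
    · rw [ind1_of_notMem hs, indicator_of_notMem hs, mul_zero]
  simp_rw [e]
  rw [intervalIntegral.integral_of_le (by linarith), setIntegral_indicator measurableSet_Ioo,
    inter_eq_self_of_subset_right (Ioo_subset_Ioc_self.trans (Ioc_subset_Ioc ha hb)),
    ← integral_Ioc_eq_integral_Ioo, ← intervalIntegral.integral_of_le hlu,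
    intervalIntegral.integral_sub (by simp) (by simp)]
  simp only [intervalIntegral.integral_const, integral_id, smul_eq_mul]
  ring

/-- The flow moves an interval rigidly, its centre being multiplied by `1 - t`. -/
lemma symFlow_Ioo (c : ℝ) {r t : ℝ} (hr : 0 < r) (h0 : 0 < t) (h1 : t < 1) :
    symFlow t (Ioo (c - r) (c + r)) =ᵐ[volume]
      Ioo ((1 - t) * c - r) ((1 - t) * c + r) := by
  set J := Ioo (c - r) (c + r) with hJ
  set α := 1 - t with hα
  have hα0 : 0 < α := by linarith
  have hJf : volume J ≠ ⊤ := measure_Ioo_lt_top.ne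
  have hsub : J ⊆ swept J α := open_subset_swept isOpen_Ioo (by linarith)
  have hc : c ∈ J := ⟨by linarith, by linarith⟩
  obtain ⟨a, b, hgap, hcab⟩ := exists_gap measurableSet_Ioo hJf hα0 (hsub hc)
  have ha : a ≤ c - r := by
    by_contra h
    exact hgap.2.1 (hsub ⟨not_le.1 h, hcab.1.trans hc.2⟩)
  have hb : c + r ≤ b := by
    by_contra h
    exact hgap.2.2.1 (hsub ⟨hc.1.trans hcab.2, not_le.1 h⟩)
  have hm := gap_mass measurableSet_Ioo hJf hα0 hgap.1.le hgap.2.1 hgap.2.2.1 hgap.2.2.2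
  have ht := gap_tilt measurableSet_Ioo hJf hα0 hgap.1.le hgap.2.1 hgap.2.2.1 hgap.2.2.2
  rw [mass_eq measurableSet_Ioo hgap.1.le,
    inter_eq_self_of_subset_left (Ioo_subset_Ioc_self.trans (Ioc_subset_Ioc ha hb)),
    Real.volume_Ioo, ENNReal.toReal_ofReal (by linarith)] at hm
  rw [tilt_Ioo (by linarith) ha hb] at ht
  -- mass and first moment on the gap locate its endpoints
  have hmid : b - c = (b - a) / 2 := by
    have : (2 * r) * (b - c) = (2 * r) * ((b - a) / 2) := by
      have e : α * (b - a) ^ 2 / 2 = (α * (b - a)) * ((b - a) / 2) := by ring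
      rw [e, ← hm] at ht
      ring_nf at ht ⊢
      exact ht
    exact mul_left_cancel₀ (by positivity) this
  have hbe : α * b = α * c + r := by
    have : α * (b - c) = r := by rw [hmid]; linarith
    linarith
  have hae : α * a = α * c - r := by
    have : α * (b - a) = α * b - α * a := by ring
    linarith
  have hsub' : Ioo (α * c - r) (α * c + r) ⊆ symFlow t J := by
    rw [symFlow_of_mem h0 h1]
    intro x hx
    refine hgap.2.2.2 ⟨?_, ?_⟩
    · rw [lt_div_iff₀ hα0, mul_comm, hae]; exact hx.1
    · rw [div_lt_iff₀ hα0, mul_comm b, hbe]; exact hx.2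
  refine Filter.EventuallyEq.symm (ae_eq_iff_symmDiff.2 (ae_eq_of_subset_of_volume hsub'
    measurableSet_Ioo (volume_symFlow_ne_top measurableSet_Ioo hJf t) ?_))
  rw [volume_symFlow measurableSet_Ioo hJf, Real.volume_Ioo, Real.volume_Ioo]
  congr 1
  ring

/-- The interval with endpoints `p`, translated so that its centre is multiplied by `1 - t`. -/
def shiftIoo (t : ℝ) (p : ℝ × ℝ) : Set ℝ :=
  Ioo ((1 - t) * ((p.1 + p.2) / 2) - (p.2 - p.1) / 2) ((1 - t) * ((p.1 + p.2) / 2) + (p.2 - p.1) / 2)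

lemma shiftIoo_zero (p : ℝ × ℝ) : shiftIoo 0 p = Ioo p.1 p.2 := by
  unfold shiftIoo
  congr 1 <;> ring

lemma volume_shiftIoo (t : ℝ) (p : ℝ × ℝ) : volume (shiftIoo t p) = ENNReal.ofReal (p.2 - p.1) := by
  unfold shiftIoo
  rw [Real.volume_Ioo]
  congr 1
  ring

lemma eventually_disjoint_shiftIoo {s : Finset (ℝ × ℝ)}
    (hs : ∀ p ∈ s, ∀ q ∈ s, p ≠ q → p.2 < q.1 ∨ q.2 < p.1) :
    ∀ᶠ t in nhds (0 : ℝ), (s : Set (ℝ × ℝ)).PairwiseDisjoint (shiftIoo t) := by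
  have key : ∀ p q : ℝ × ℝ, p.2 < q.1 → ∀ᶠ t in nhds (0 : ℝ),
      Disjoint (shiftIoo t p) (shiftIoo t q) := by
    intro p q h
    have c1 : ContinuousAt (fun t : ℝ => (1 - t) * ((p.1 + p.2) / 2) + (p.2 - p.1) / 2) 0 := by
      fun_prop
    have c2 : ContinuousAt (fun t : ℝ => (1 - t) * ((q.1 + q.2) / 2) - (q.2 - q.1) / 2) 0 := by
      fun_prop
    have := c1.eventually_lt c2 (by linarith)
    filter_upwards [this] with t ht
    rw [Set.disjoint_left]
    intro x hx hx'
    exact absurd (hx.2.trans (ht.trans hx'.1)) (lt_irrefl _)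
  have : ∀ᶠ t in nhds (0 : ℝ), ∀ p ∈ s, ∀ q ∈ s, p ≠ q →
      Disjoint (shiftIoo t p) (shiftIoo t q) := by
    rw [Filter.eventually_all_finset]
    intro p hp
    rw [Filter.eventually_all_finset]
    intro q hq
    by_cases hpq : p = q
    · exact Eventually.of_forall fun t h => absurd hpq h
    · rcases hs p hp q hq hpq with h | h
      · exact (key p q h).mono fun t ht _ => ht
      · exact (key q p h).mono fun t ht _ => ht.symm
  filter_upwards [this] with t ht
  intro p hp q hq hpq
  exact ht p hp q hq hpq

/-- As long as the translated intervals stay disjoint, they form the flow of the union. -/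
lemma symFlow_fu_eq {s : Finset (ℝ × ℝ)} (hs : ∀ p ∈ s, p.1 < p.2)
    (hd0 : (s : Set (ℝ × ℝ)).PairwiseDisjoint (shiftIoo 0)) {t : ℝ} (h0 : 0 < t) (h1 : t < 1)
    (hd : (s : Set (ℝ × ℝ)).PairwiseDisjoint (shiftIoo t)) :
    symFlow t (fu s) =ᵐ[volume] ⋃ p ∈ s, shiftIoo t p := by
  have hsub : (⋃ p ∈ s, shiftIoo t p) ≤ᵐ[volume] symFlow t (fu s) := by
    rw [ae_le_set]
    simp_rw [iUnion_sdiff]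
    refine (measure_biUnion_null_iff s.countable_toSet).2 fun p hp => ?_
    rw [← ae_le_set]
    have hp' := hs p hp
    have e := symFlow_Ioo ((p.1 + p.2) / 2) (r := (p.2 - p.1) / 2) (by linarith) h0 h1
    rw [show (p.1 + p.2) / 2 - (p.2 - p.1) / 2 = p.1 by ring,
      show (p.1 + p.2) / 2 + (p.2 - p.1) / 2 = p.2 by ring] at e
    refine (e.symm.le).trans (ae_le_set.2 (symFlow_mono measurableSet_Ioo (measurableSet_fu s)
      (volume_fu_ne_top s) ?_ t))
    rw [sdiff_eq_empty.2, measure_empty]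
    exact fun x hx => mem_fu.2 ⟨p, hp, hx⟩
  have hv : ∀ t', (s : Set (ℝ × ℝ)).PairwiseDisjoint (shiftIoo t') →
      volume (⋃ p ∈ s, shiftIoo t' p) = ∑ p ∈ s, ENNReal.ofReal (p.2 - p.1) := by
    intro t' h
    rw [measure_biUnion_finset h fun p _ => measurableSet_Ioo]
    exact Finset.sum_congr rfl fun p _ => volume_shiftIoo t' p
  have e0 : fu s = ⋃ p ∈ s, shiftIoo 0 p := by
    simp_rw [shiftIoo_zero]; rfl
  refine Filter.EventuallyEq.symm (ae_eq_of_ae_subset_of_measure_ge hsub ?_ ?_ ?_)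
  · rw [volume_symFlow (measurableSet_fu s) (volume_fu_ne_top s), hv t hd, e0, hv 0 hd0]
  · exact (s.measurableSet_biUnion fun p _ => measurableSet_Ioo).nullMeasurableSet
  · exact volume_symFlow_ne_top (measurableSet_fu s) (volume_fu_ne_top s) t

lemma T1_shiftIoo_mono {p q r : ℝ × ℝ} (hp : p.1 < p.2) (hq : q.1 < q.2) {t : ℝ} (h0 : 0 ≤ t)
    (h1 : t ≤ 1) :
    T1 (shiftIoo 0 p) (shiftIoo 0 q) (shiftIoo 0 r) ≤
      T1 (shiftIoo t p) (shiftIoo t q) (shiftIoo t r) := by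
  unfold shiftIoo
  simp only [sub_zero, one_mul]
  exact T1_intervals_mono (by linarith) (by linarith) _ _ _ (by linarith) (by linarith)

/-- For finite unions of intervals the trilinear form does not decrease for short times. -/
lemma eventually_T1_le (s₁ s₂ s₃ : Finset (ℝ × ℝ)) :
    ∀ᶠ t in nhdsWithin (0 : ℝ) (Ioi 0), T1 (fu s₁) (fu s₂) (fu s₃) ≤
      T1 (symFlow t (fu s₁)) (symFlow t (fu s₂)) (symFlow t (fu s₃)) := by
  have main : ∀ s : Finset (ℝ × ℝ), ∃ s' : Finset (ℝ × ℝ), (∀ p ∈ s', p.1 < p.2) ∧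
      fu s =ᵐ[volume] (⋃ p ∈ s', shiftIoo 0 p) ∧
      (s' : Set (ℝ × ℝ)).PairwiseDisjoint (shiftIoo 0) ∧
      ∀ᶠ t in nhdsWithin (0 : ℝ) (Ioi 0), (s' : Set (ℝ × ℝ)).PairwiseDisjoint (shiftIoo t) ∧
        symFlow t (fu s) =ᵐ[volume] ⋃ p ∈ s', shiftIoo t p := by
    intro s
    obtain ⟨s', hae, hpos, hsep⟩ := exists_separated s
    have hd := eventually_disjoint_shiftIoo hsep
    have hd0 := hd.self_of_nhds
    refine ⟨s', hpos, ?_, hd0, ?_⟩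
    · refine hae.symm.trans (Filter.EventuallyEq.of_eq ?_)
      simp_rw [shiftIoo_zero]; rfl
    · filter_upwards [nhdsWithin_le_nhds hd, self_mem_nhdsWithin,
        nhdsWithin_le_nhds (Iio_mem_nhds (zero_lt_one' ℝ))] with t h ht0 ht1
      exact ⟨h, (symFlow_congr (measurableSet_fu s) (measurableSet_fu s') (volume_fu_ne_top s)
        (volume_fu_ne_top s') hae.symm t).trans (symFlow_fu_eq hpos hd0 ht0 ht1 h)⟩
  obtain ⟨r₁, p₁, a₁, d₁, e₁⟩ := main s₁
  obtain ⟨r₂, p₂, a₂, d₂, e₂⟩ := main s₂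
  obtain ⟨r₃, p₃, a₃, d₃, e₃⟩ := main s₃
  have hm : ∀ (t : ℝ) (r : Finset (ℝ × ℝ)), MeasurableSet (⋃ p ∈ r, shiftIoo t p) := fun t r =>
    r.measurableSet_biUnion fun p _ => measurableSet_Ioo
  filter_upwards [e₁, e₂, e₃, self_mem_nhdsWithin,
    nhdsWithin_le_nhds (Iio_mem_nhds (zero_lt_one' ℝ))] with t g₁ g₂ g₃ ht0 ht1
  rw [T1_congr a₁ a₂ (measurableSet_fu _) (hm _ _) (hm _ _) (hm _ _) a₃,
    T1_congr g₁.2 g₂.2 (measurableSet_symFlow (measurableSet_fu _) t) (hm _ _) (hm _ _) (hm _ _)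
      g₃.2,
    T1_biUnion _ _ _ d₁ d₂ d₃ (fun _ => measurableSet_Ioo) (fun _ => measure_Ioo_lt_top.ne),
    T1_biUnion _ _ _ g₁.1 g₂.1 g₃.1 (fun _ => measurableSet_Ioo) (fun _ => measure_Ioo_lt_top.ne)]
  exact Finset.sum_le_sum fun i hi => Finset.sum_le_sum fun j hj => Finset.sum_le_sum fun k _ =>
    T1_shiftIoo_mono (p₁ i hi) (p₂ j hj) (le_of_lt ht0) (le_of_lt ht1)

/-! ### Monotonicity of the trilinear form along the flow -/

lemma T1_symFlow_continuousOn {E₁ E₂ E₃ : Set ℝ} (h₁ : MeasurableSet E₁) (h₂ : MeasurableSet E₂)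
    (h₃ : MeasurableSet E₃) (f₁ : volume E₁ ≠ ⊤) (f₂ : volume E₂ ≠ ⊤) (f₃ : volume E₃ ≠ ⊤) :
    ContinuousOn (fun t => T1 (symFlow t E₁) (symFlow t E₂) (symFlow t E₃)) (Icc 0 1) := by
  intro t ht
  refine Tendsto.mono_left ?_ nhdsWithin_le_nhds
  exact tendsto_T1 (measurableSet_symFlow h₁) (measurableSet_symFlow h₁ t)
    (measurableSet_symFlow h₂) (measurableSet_symFlow h₂ t) (measurableSet_symFlow h₃)
    (measurableSet_symFlow h₃ t) (volume_symFlow_ne_top h₁ f₁) (volume_symFlow_ne_top h₁ f₁ t)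
    (volume_symFlow_ne_top h₂ f₂) (volume_symFlow_ne_top h₂ f₂ t) (volume_symFlow_ne_top h₃ f₃)
    (volume_symFlow_ne_top h₃ f₃ t) (symFlow_cont h₁ f₁ ht) (symFlow_cont h₂ f₂ ht)
    (symFlow_cont h₃ f₃ ht)

/-- For finite unions of intervals, continuous induction upgrades the short-time inequality to
monotonicity on `[0, 1]`; the flow can be restarted at any time by the semigroup property. -/
lemma T1_symFlow_mono_fu (s₁ s₂ s₃ : Finset (ℝ × ℝ)) :
    MonotoneOn (fun t => T1 (symFlow t (fu s₁)) (symFlow t (fu s₂)) (symFlow t (fu s₃)))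
      (Icc 0 1) := by
  set f := fun t => T1 (symFlow t (fu s₁)) (symFlow t (fu s₂)) (symFlow t (fu s₃)) with hf
  have hc : ContinuousOn f (Icc 0 1) := T1_symFlow_continuousOn (measurableSet_fu _)
    (measurableSet_fu _) (measurableSet_fu _) (volume_fu_ne_top _) (volume_fu_ne_top _)
    (volume_fu_ne_top _)
  intro s hs t ht hst
  have hsub : Icc s t ⊆ Icc 0 1 := Icc_subset_Icc hs.1 ht.2
  suffices h : Icc s t ⊆ {x | f s ≤ f x} from h ⟨hst, le_rfl⟩
  refine IsClosed.Icc_subset_of_forall_exists_gt ?_ (le_refl (f s)) ?_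
  · rw [inter_comm]
    exact (hc.mono hsub).preimage_isClosed_of_isClosed isClosed_Icc isClosed_Ici
  · rintro x ⟨hx, hsx, hxt⟩ y hy
    have hx0 : 0 ≤ x := hs.1.trans hsx
    have hx1 : x < 1 := hxt.trans_le ht.2
    obtain ⟨r₁, e₁⟩ := symFlow_fu s₁ x
    obtain ⟨r₂, e₂⟩ := symFlow_fu s₂ x
    obtain ⟨r₃, e₃⟩ := symFlow_fu s₃ x
    have hcy : ContinuousAt (fun τ : ℝ => x + τ * (1 - x)) 0 := by fun_prop
    have hey := hcy.eventually_lt (continuousAt_const (y := y)) (by simpa using hy)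
    have hτ1 : ∀ᶠ τ in nhdsWithin (0 : ℝ) (Ioi 0), τ < 1 :=
      nhdsWithin_le_nhds (Iio_mem_nhds (zero_lt_one' ℝ))
    have hτ0 : ∀ᶠ τ in nhdsWithin (0 : ℝ) (Ioi 0), 0 < τ := self_mem_nhdsWithin
    obtain ⟨τ, hτ, hτ0, hτ1, hτy⟩ := ((eventually_T1_le r₁ r₂ r₃).and
      (hτ0.and (hτ1.and (hey.filter_mono nhdsWithin_le_nhds)))).exists
    have hpos := mul_pos hτ0 (sub_pos.2 hx1)
    refine ⟨x + τ * (1 - x), le_trans (b := f x) hx ?_, by linarith, hτy.le⟩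
    have hle1 : x + τ * (1 - x) ≤ 1 := by nlinarith
    have hτe : 1 - (1 - (x + τ * (1 - x))) / (1 - x) = τ := by
      have : 1 - x ≠ 0 := by linarith
      field_simp
      ring
    have restart : ∀ s r : Finset (ℝ × ℝ), symFlow x (fu s) =ᵐ[volume] fu r →
        symFlow τ (fu r) =ᵐ[volume] symFlow (x + τ * (1 - x)) (fu s) := by
      intro s r e
      have h := symFlow_semigroup (measurableSet_fu s) (volume_fu_ne_top s) hx0
        (by linarith : x ≤ x + τ * (1 - x)) hle1
      rw [hτe] at h
      refine Filter.EventuallyEq.symm ((ae_eq_iff_symmDiff.2 h).trans ?_)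
      exact symFlow_congr (measurableSet_symFlow (measurableSet_fu s) x) (measurableSet_fu r)
        (volume_symFlow_ne_top (measurableSet_fu s) (volume_fu_ne_top s) x) (volume_fu_ne_top r) e τ
    have m : ∀ (t : ℝ) (s : Finset (ℝ × ℝ)), MeasurableSet (symFlow t (fu s)) := fun t s =>
      measurableSet_symFlow (measurableSet_fu s) t
    rw [T1_congr (restart _ _ e₁) (restart _ _ e₂) (m _ _) (m _ _) (m _ _) (m _ _)
      (restart _ _ e₃)] at hτ
    rw [hf]
    beta_reduce
    rw [T1_congr e₁ e₂ (m _ _) (measurableSet_fu _) (measurableSet_fu _) (measurableSet_fu _) e₃]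
    exact hτ

/-- Finite unions of intervals are dense among sets of finite measure. -/
lemma exists_fu_approx {E : Set ℝ} (hE : MeasurableSet E) (hfin : volume E ≠ ⊤) {ε : ENNReal}
    (hε : ε ≠ 0) : ∃ s, volume (symmDiff (fu s) E) ≤ ε := by
  have hε2 : ε / 2 ≠ 0 := (ENNReal.half_pos hε).ne'
  obtain ⟨K, hKE, hK, hKv⟩ := hE.exists_isCompact_sdiff_lt hfin hε2
  obtain ⟨U, hEU, hU, -, hUv⟩ := hE.exists_isOpen_sdiff_lt hfin hε2
  have hloc : ∀ x : ℝ, ∃ p : ℝ × ℝ, x ∈ U → x ∈ Ioo p.1 p.2 ∧ Ioo p.1 p.2 ⊆ U := by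
    intro x
    by_cases hx : x ∈ U
    · obtain ⟨a, b, hab, hsub⟩ := mem_nhds_iff_exists_Ioo_subset.1 (hU.mem_nhds hx)
      exact ⟨(a, b), fun _ => ⟨hab, hsub⟩⟩
    · exact ⟨0, fun h => absurd h hx⟩
  choose g hg using hloc
  obtain ⟨F, hFK, hF⟩ := hK.elim_nhds_subcover (fun x => Ioo (g x).1 (g x).2) fun x hx =>
    isOpen_Ioo.mem_nhds (hg x (hEU (hKE hx))).1
  classical
  refine ⟨F.image g, ?_⟩
  have h1 : K ⊆ fu (F.image g) := by
    intro x hx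
    obtain ⟨y, hy, hxy⟩ := mem_iUnion₂.1 (hF hx)
    exact mem_fu.2 ⟨g y, Finset.mem_image_of_mem g hy, hxy⟩
  have h2 : fu (F.image g) ⊆ U := by
    intro x hx
    obtain ⟨p, hp, hxp⟩ := mem_fu.1 hx
    obtain ⟨y, hy, rfl⟩ := Finset.mem_image.1 hp
    exact (hg y (hEU (hKE (hFK y hy)))).2 hxp
  calc volume (symmDiff (fu (F.image g)) E) ≤ volume ((U \ E) ∪ (E \ K)) := by
        refine measure_mono ?_
        rintro x (⟨hx, hxE⟩ | ⟨hx, hxf⟩)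
        · exact Or.inl ⟨h2 hx, hxE⟩
        · exact Or.inr ⟨hx, fun h => hxf (h1 h)⟩
    _ ≤ volume (U \ E) + volume (E \ K) := measure_union_le _ _
    _ ≤ ε / 2 + ε / 2 := add_le_add hUv.le hKv.le
    _ = ε := ENNReal.add_halves ε

lemma exists_fu_seq {E : Set ℝ} (hE : MeasurableSet E) (hfin : volume E ≠ ⊤) :
    ∃ s : ℕ → Finset (ℝ × ℝ), ∀ t,
      Tendsto (fun n => volume (symmDiff (symFlow t (fu (s n))) (symFlow t E))) atTop (nhds 0) := by
  choose s hs using fun n : ℕ =>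
    exists_fu_approx hE hfin (ε := (n : ENNReal)⁻¹) (ENNReal.inv_ne_zero.2 (ENNReal.natCast_ne_top n))
  refine ⟨s, fun t => ?_⟩
  refine tendsto_of_tendsto_of_tendsto_of_le_of_le tendsto_const_nhds
    ENNReal.tendsto_inv_nat_nhds_zero (fun n => zero_le) fun n => ?_
  exact (symFlow_contract (measurableSet_fu _) hE (volume_fu_ne_top _) hfin t).trans (hs n)

lemma T1_symFlow_mono {E₁ E₂ E₃ : Set ℝ} (h₁ : MeasurableSet E₁) (h₂ : MeasurableSet E₂)
    (h₃ : MeasurableSet E₃) (f₁ : volume E₁ ≠ ⊤) (f₂ : volume E₂ ≠ ⊤) (f₃ : volume E₃ ≠ ⊤) :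
    MonotoneOn (fun t => T1 (symFlow t E₁) (symFlow t E₂) (symFlow t E₃)) (Icc 0 1) := by
  obtain ⟨s₁, a₁⟩ := exists_fu_seq h₁ f₁
  obtain ⟨s₂, a₂⟩ := exists_fu_seq h₂ f₂
  obtain ⟨s₃, a₃⟩ := exists_fu_seq h₃ f₃
  have key : ∀ t, Tendsto (fun n => T1 (symFlow t (fu (s₁ n))) (symFlow t (fu (s₂ n)))
      (symFlow t (fu (s₃ n)))) atTop
      (nhds (T1 (symFlow t E₁) (symFlow t E₂) (symFlow t E₃))) := by
    intro t
    have m : ∀ s : Finset (ℝ × ℝ), MeasurableSet (symFlow t (fu s)) := fun s =>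
      measurableSet_symFlow (measurableSet_fu s) t
    have v : ∀ s : Finset (ℝ × ℝ), volume (symFlow t (fu s)) ≠ ⊤ := fun s =>
      volume_symFlow_ne_top (measurableSet_fu s) (volume_fu_ne_top s) t
    exact tendsto_T1 (fun n => m _) (measurableSet_symFlow h₁ t) (fun n => m _)
      (measurableSet_symFlow h₂ t) (fun n => m _) (measurableSet_symFlow h₃ t) (fun n => v _)
      (volume_symFlow_ne_top h₁ f₁ t) (fun n => v _) (volume_symFlow_ne_top h₂ f₂ t) (fun n => v _)
      (volume_symFlow_ne_top h₃ f₃ t) (a₁ t) (a₂ t) (a₃ t)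
  intro s hs t ht hst
  exact le_of_tendsto_of_tendsto' (key s) (key t) fun n =>
    T1_symFlow_mono_fu (s₁ n) (s₂ n) (s₃ n) hs ht hst

/-- Existence of a symmetrizing flow of one-dimensional sets, with properties
(1)–(7) of Proposition `RSflow`. -/
theorem exists_symmetrization_flow :
    ∃ flow : ℝ → Set ℝ → Set ℝ,
      -- single-set properties (1), (2), (3), and measurability
      (∀ E : Set ℝ, MeasurableSet E → volume E ≠ ⊤ →
        (∀ t ∈ Set.Icc (0:ℝ) 1, MeasurableSet (flow t E)) ∧
        volume (symmDiff (flow 0 E) E) = 0 ∧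
        volume (symmDiff (flow 1 E) (intervalStar E)) = 0 ∧
        (∀ t ∈ Set.Icc (0:ℝ) 1, volume (flow t E) = volume E) ∧
        (∀ t ∈ Set.Icc (0:ℝ) 1,
          Tendsto (fun s => (volume (symmDiff (flow s E) (flow t E))).toReal)
            (nhdsWithin t (Set.Icc (0:ℝ) 1)) (nhds 0))) ∧
      -- (4) inclusion monotonicity, up to null sets
      (∀ E F : Set ℝ, MeasurableSet E → MeasurableSet F → volume E ≠ ⊤ → volume F ≠ ⊤ →
        volume (E \ F) = 0 → ∀ s ∈ Set.Icc (0:ℝ) 1, volume (flow s E \ flow s F) = 0) ∧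
      -- (5) contractivity
      (∀ E F : Set ℝ, MeasurableSet E → MeasurableSet F → volume E ≠ ⊤ → volume F ≠ ⊤ →
        ∀ t ∈ Set.Icc (0:ℝ) 1,
          volume (symmDiff (flow t E) (flow t F)) ≤ volume (symmDiff E F)) ∧
      -- (6) independence of past history: E(t) = (E(s))(τ) with 1 − τ = (1−t)/(1−s)
      (∀ E : Set ℝ, MeasurableSet E → volume E ≠ ⊤ →
        ∀ s t : ℝ, 0 ≤ s → s ≤ t → t ≤ 1 →
          volume (symmDiff (flow t E) (flow (1 - (1 - t) / (1 - s)) (flow s E))) = 0) ∧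
      -- (7) functional monotonicity and continuity
      (∀ E₁ E₂ E₃ : Set ℝ,
        MeasurableSet E₁ → MeasurableSet E₂ → MeasurableSet E₃ →
        volume E₁ ≠ ⊤ → volume E₂ ≠ ⊤ → volume E₃ ≠ ⊤ →
        ContinuousOn (fun t => T1 (flow t E₁) (flow t E₂) (flow t E₃)) (Set.Icc 0 1) ∧
        MonotoneOn (fun t => T1 (flow t E₁) (flow t E₂) (flow t E₃)) (Set.Icc 0 1)) := by
  refine ⟨symFlow, fun E hE hfin => ⟨fun t _ => measurableSet_symFlow hE t, ?_, ?_,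
    fun t _ => volume_symFlow hE hfin t, fun t ht => ?_⟩,
    fun E F hE hF _ hFf h s _ => symFlow_mono hE hF hFf h s,
    fun E F hE hF hEf hFf t _ => symFlow_contract hE hF hEf hFf t,
    fun E hE hfin s t hs hst ht => symFlow_semigroup hE hfin hs hst ht,
    fun E₁ E₂ E₃ h₁ h₂ h₃ f₁ f₂ f₃ => ⟨T1_symFlow_continuousOn h₁ h₂ h₃ f₁ f₂ f₃,
      T1_symFlow_mono h₁ h₂ h₃ f₁ f₂ f₃⟩⟩
  · rw [symFlow_of_le le_rfl, symmDiff_self]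
    exact measure_empty
  · rw [symFlow_of_ge le_rfl, symmDiff_self]
    exact measure_empty
  · have h := (ENNReal.tendsto_toReal ENNReal.zero_ne_top).comp (symFlow_cont hE hfin ht)
    rw [ENNReal.toReal_zero] at h
    exact h.mono_left nhdsWithin_le_nhds
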